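/- Let Γ = ℤ^5 ⋊ ℤ/4 where the generator of ℤ/4 acts on ℤ^5 by the matrix [[-1,0,0,0,0],[0,1,0,0,0],[0,0,1,1,0],[0,0,-1,0,-1],[0,0,-1,0,0]]. Then H^1(Γ,ℤ) ≅ ℤ^2; H^2(Γ,ℤ) ≅ ℤ^2 ⊕ ℤ/4 ⊕ ℤ/2; H^3(Γ,ℤ) ≅ ℤ^2 ⊕ (ℤ/4)^2 ⊕ (ℤ/2)^2; H^4(Γ,ℤ) ≅ ℤ ⊕ (ℤ/4)^2 ⊕ (ℤ/2)^4; and H^i(Γ,ℤ) ≅ (ℤ/4)^2 ⊕ (ℤ/2)^6 for all i ≥ 5. -/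

import Mathlib

open Matrix

namespace Crystal

/-- The lattice `ℤ^n`, written multiplicatively so that it can be a factor of a semidirect
product of groups. -/
abbrev Lat (n : ℕ) : Type := Multiplicative (Fin n → ℤ)

/-- The invertible integer matrix determined by `M` with `M ^ (m + 1) = 1`. -/
def matUnit {n : ℕ} (M : Matrix (Fin n) (Fin n) ℤ) (m : ℕ) (hm : M ^ (m + 1) = 1) :
    (Matrix (Fin n) (Fin n) ℤ)ˣ :=
  ⟨M, M ^ m, by rw [← pow_succ']; exact hm, by rw [← pow_succ]; exact hm⟩

/-- Linear automorphisms of `ℤ^n` as multiplicative automorphisms of the multiplicative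
version of `ℤ^n`. -/
def linToAut (n : ℕ) : ((Fin n → ℤ) ≃ₗ[ℤ] (Fin n → ℤ)) →* MulAut (Lat n) :=
  MonoidHom.mk' (fun e => AddEquiv.toMultiplicative e.toAddEquiv) (fun _ _ => rfl)

/-- An invertible integer matrix acts on the (multiplicative) lattice `ℤ^n` by (left)
matrix-vector multiplication. -/
def glToAut (n : ℕ) : (Matrix (Fin n) (Fin n) ℤ)ˣ →* MulAut (Lat n) :=
  (linToAut n).comp
    ((LinearMap.GeneralLinearGroup.generalLinearEquiv ℤ (Fin n → ℤ)).toMonoidHom.comp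
      (Matrix.GeneralLinearGroup.toLin).toMonoidHom)

/-- The homomorphism from `ℤ/m` (written multiplicatively) to a group `G` sending the
generator `1` to a chosen element `α` satisfying `α ^ m = 1`. -/
def zmodHom {G : Type*} [Group G] (m : ℕ) [NeZero m] (α : G) (hα : α ^ m = 1) :
    Multiplicative (ZMod m) →* G :=
  MonoidHom.mk' (fun g => α ^ (g.toAdd.val)) (by
    intro a b
    show α ^ (ZMod.val (a.toAdd + b.toAdd)) = α ^ (ZMod.val a.toAdd) * α ^ (ZMod.val b.toAdd)
    rw [ZMod.val_add, ← pow_eq_pow_mod _ hα, pow_add])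

/-- The action of `ℤ/q` on the lattice `ℤ^n` in which the generator `1` of `ℤ/q` acts by left
multiplication by the integer matrix `M`; `M` is required to satisfy `M ^ q = 1`. -/
def matAction {n : ℕ} (q : ℕ) [NeZero q] (M : Matrix (Fin n) (Fin n) ℤ)
    (hq : M ^ q = 1) : Multiplicative (ZMod q) →* MulAut (Lat n) :=
  zmodHom q (glToAut n (matUnit M (q - 1) (by
      rwa [Nat.sub_add_cancel (Nat.one_le_iff_ne_zero.2 (NeZero.ne q))])))
    (by
      rw [← map_pow]
      convert map_one (glToAut n)
      ext i j
      rw [Units.val_pow_eq_pow_val]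
      simp [matUnit, hq])

/-- The crystallographic group `ℤ^n ⋊ ℤ/q` in which the generator `1` of `ℤ/q` acts on the
lattice `ℤ^n` by left multiplication by the integer matrix `M` (with `M ^ q = 1`). -/
abbrev Crys {n : ℕ} (q : ℕ) [NeZero q] (M : Matrix (Fin n) (Fin n) ℤ) (hq : M ^ q = 1) : Type :=
  SemidirectProduct (Lat n) (Multiplicative (ZMod q)) (matAction q M hq)


open CategoryTheory groupCohomology

variable {k : Type} [CommRing k]

lemma comp_contractNth {G H : Type*} [Monoid G] [Monoid H] (f : G →* H) {n : ℕ}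
    (j : Fin (n + 1)) (g : Fin (n + 1) → G) (i : Fin n) :
    f (Fin.contractNth j (· * ·) g i) = Fin.contractNth j (· * ·) (fun l => f (g l)) i := by
  rcases lt_trichotomy (i : ℕ) j with h | h | h
  · rw [Fin.contractNth_apply_of_lt _ _ _ _ h, Fin.contractNth_apply_of_lt _ _ _ _ h]
  · rw [Fin.contractNth_apply_of_eq _ _ _ _ h, Fin.contractNth_apply_of_eq _ _ _ _ h,
      _root_.map_mul]
  · rw [Fin.contractNth_apply_of_gt _ _ _ _ h, Fin.contractNth_apply_of_gt _ _ _ _ h]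

/-- The map of inhomogeneous cochain complexes induced (contravariantly in the group,
covariantly in the coefficients) by a group homomorphism `f : H →* G` together with a
compatible linear map `τ : A → B` of coefficients. -/
def cochainsMap {G H : Type} [Group G] [Group H] (A : Rep k G) (B : Rep k H)
    (f : H →* G) (τ : A →ₗ[k] B)
    (hcomp : ∀ (h : H) (a : A), τ (A.ρ (f h) a) = B.ρ h (τ a)) :
    inhomogeneousCochains A ⟶ inhomogeneousCochains B where
  f n := ModuleCat.ofHom
    { toFun := fun F v => τ (F (fun i => f (v i)))
      map_add' := fun x y => by funext v; simp
      map_smul' := fun r x => by funext v; simp }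
  comm' i j hij := by
    have hij' : i + 1 = j := hij
    subst hij'
    ext F v
    rw [inhomogeneousCochains.d_def, inhomogeneousCochains.d_def]
    show (inhomogeneousCochains.d B i) (fun w => τ (F (fun l => f (w l)))) v
      = τ ((inhomogeneousCochains.d A i) F (fun l => f (v l)))
    simp only [inhomogeneousCochains.d_hom_apply, map_add, map_sum, _root_.map_smul]
    congr 1
    · exact (hcomp (v 0) _).symm
    · refine Finset.sum_congr rfl fun j' _ => ?_
      have hc : (fun l => f (j'.contractNth (· * ·) v l))
          = j'.contractNth (· * ·) (fun l => f (v l)) := by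
        funext l
        exact comp_contractNth f j' v l
      rw [hc]

lemma cochainsMap_eq_id {G : Type} [Group G] (A : Rep k G) (f : G →* G) (τ : A →ₗ[k] A)
    (hcomp : ∀ (h : G) (a : A), τ (A.ρ (f h) a) = A.ρ h (τ a))
    (hf : ∀ x, f x = x) (hτ : ∀ a, τ a = a) :
    cochainsMap A A f τ hcomp = 𝟙 _ := by
  apply HomologicalComplex.Hom.ext
  funext n
  ext F v
  show τ (F (fun i => f (v i))) = F v
  simp only [hf, hτ]

lemma cochainsMap_comp {G H K : Type} [Group G] [Group H] [Group K]
    (A : Rep k G) (B : Rep k H) (C : Rep k K)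
    (f₁ : H →* G) (τ₁ : A →ₗ[k] B) (h₁ : ∀ (h : H) (a : A), τ₁ (A.ρ (f₁ h) a) = B.ρ h (τ₁ a))
    (f₂ : K →* H) (τ₂ : B →ₗ[k] C) (h₂ : ∀ (h : K) (a : B), τ₂ (B.ρ (f₂ h) a) = C.ρ h (τ₂ a))
    (f₃ : K →* G) (τ₃ : A →ₗ[k] C) (h₃ : ∀ (h : K) (a : A), τ₃ (A.ρ (f₃ h) a) = C.ρ h (τ₃ a))
    (hf : ∀ x, f₁ (f₂ x) = f₃ x) (hτ : ∀ a, τ₂ (τ₁ a) = τ₃ a) :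
    cochainsMap A B f₁ τ₁ h₁ ≫ cochainsMap B C f₂ τ₂ h₂ = cochainsMap A C f₃ τ₃ h₃ := by
  apply HomologicalComplex.Hom.ext
  funext n
  ext F v
  show τ₂ (τ₁ (F (fun i => f₁ (f₂ (v i))))) = τ₃ (F (fun i => f₃ (v i)))
  simp only [hf]
  exact hτ _

/-- Given an action `φ` of a group `G` on a group `L` and a representation `ψ` of `G` on a
`k`-module `V`, this is `H^j(L, V)` (with `L` acting trivially on the coefficients `V`),
endowed with the `G`-action functorially induced by the action of `G` on `L` and on `V`:
`g` acts via the conjugation automorphism `φ g⁻¹` of `L` and via `ψ g` on `V`. -/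
noncomputable def cohRep {G L V : Type} [Group G] [Group L] [AddCommGroup V] [Module k V]
    (φ : G →* MulAut L) (ψ : Representation k G V) (j : ℕ) : Rep k G :=
  Rep.of (X := groupCohomology (Rep.trivial k L V) j)
    { toFun := fun g => ModuleCat.Hom.hom (HomologicalComplex.homologyMap
        (cochainsMap (Rep.trivial k L V) (Rep.trivial k L V) (φ g⁻¹).toMonoidHom (ψ g)
          (fun _ _ => rfl)) j)
      map_one' := by
        have h := cochainsMap_eq_id (Rep.trivial k L V) (φ 1⁻¹).toMonoidHom (ψ 1)
          (fun _ _ => rfl) (fun x => by simp) (fun a => by simp)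
        exact congrArg ModuleCat.Hom.hom
          ((congrArg (fun c => HomologicalComplex.homologyMap c j) h).trans
            (HomologicalComplex.homologyMap_id _ j))
      map_mul' := fun g₁ g₂ => by
        have h := cochainsMap_comp (Rep.trivial k L V) (Rep.trivial k L V) (Rep.trivial k L V)
          (φ g₂⁻¹).toMonoidHom (ψ g₂) (fun _ _ => rfl)
          (φ g₁⁻¹).toMonoidHom (ψ g₁) (fun _ _ => rfl)
          (φ (g₁ * g₂)⁻¹).toMonoidHom (ψ (g₁ * g₂)) (fun _ _ => rfl)
          (fun x => by simp [_root_.mul_inv_rev]) (fun a => by simp)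
        rw [← h, HomologicalComplex.homologyMap_comp]
        rfl }


/-- `H^i(G, H^j(L, ℤ))`: the `i`-th cohomology of the cyclic group `ℤ/q` with coefficients in
the `j`-th cohomology of the lattice `ℤ^n` (with trivial `ℤ` coefficients), where the
`ℤ/q`-action on `H^j(ℤ^n, ℤ)` is the one functorially induced by the matrix action on the
lattice. -/
noncomputable abbrev cohOfCoh {n : ℕ} (q : ℕ) [NeZero q] (M : Matrix (Fin n) (Fin n) ℤ)
    (hq : M ^ q = 1) (i j : ℕ) : ModuleCat ℤ :=
  groupCohomology
    (cohRep (matAction q M hq) (1 : Representation ℤ (Multiplicative (ZMod q)) ℤ) j) i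

/-- `H^k(Γ, ℤ)` for `Γ = ℤ^n ⋊ ℤ/q`, with trivial coefficients `ℤ`. -/
noncomputable abbrev cohCrys {n : ℕ} (q : ℕ) [NeZero q] (M : Matrix (Fin n) (Fin n) ℤ)
    (hq : M ^ q = 1) (k : ℕ) : ModuleCat ℤ :=
  groupCohomology (Rep.trivial ℤ (Crys q M hq) ℤ) k

end Crystal

/-- The holonomy matrix. -/
def holM : Matrix (Fin 5) (Fin 5) ℤ := !![-1, 0, 0, 0, 0; 0, 1, 0, 0, 0; 0, 0, 1, 1, 0; 0, 0, -1, 0, -1; 0, 0, -1, 0, 0]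

lemma holM_pow : holM ^ 4 = 1 := by decide

/-- `H^k(ℤ^5 ⋊ ℤ/4, ℤ)`, where the generator of `ℤ/4` acts on `ℤ^5` by left
multiplication by the matrix `holM`. -/
noncomputable abbrev H (k : ℕ) : ModuleCat ℤ := Crystal.cohCrys 4 holM holM_pow k

/-- `H^i(ℤ/4, H^j(ℤ^5, ℤ))`, with the functorially induced action on coefficients. -/
noncomputable abbrev Hc (i j : ℕ) : ModuleCat ℤ := Crystal.cohOfCoh 4 holM holM_pow i j

/-!
The group `ℤ⁵ ⋊ ℤ/4` acts on `ℝ⁵` by translations and a rotation-reflection of order four. In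
suitable coordinates these preserve a tiling by cubes, and the integral cohomology is that of the
double complex built from the translation-invariant cubical cochains and the periodic resolution of
`ℤ/4`. The lattice is then the product of the face-centred cubic lattice, turned through a right
angle, and two lines on which the generator acts by `1` and by `-1`.

An invariant line with action `u = ±1` is a circle factor of the quotient by translations, whose
two cells split the total complex: `H^n` becomes the sum of `H^n` of the remaining factor and of its
`H^(n-1)` with coefficients twisted by `u`. This reduces the computation to the three-dimensional
factor with coefficients `ℤ` and with `ℤ` twisted by the sign. There the double complex lives on 16
classes of cells, so its cohomology in degrees up to five is a finite computation, and from degree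
four on it is periodic of period two.
-/

section Subquotient

variable {R U U' T : Type*} [Ring R] [AddCommGroup U] [AddCommGroup U'] [AddCommGroup T]
  [Module R U] [Module R U'] [Module R T]

/-- The subquotient `Z / (Z ∩ B)` of a module; the homology of a complex is the case of cocycles
`Z` and coboundaries `B`. -/
abbrev Subquotient (Z B : Submodule R U) : Type _ := Z ⧸ B.submoduleOf Z

namespace Subquotient

/-- A surjection from `Z` which vanishes exactly on `B` computes the subquotient `Z / B`. -/
noncomputable def equivOfSurjective {Z B : Submodule R U} (ψ : Z →ₗ[R] T)
    (hψ : Function.Surjective ψ) (hker : ∀ z, ψ z = 0 ↔ (z : U) ∈ B) : Subquotient Z B ≃ₗ[R] T :=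
  (Submodule.quotEquivOfEq _ _ (Submodule.ext fun z => (hker z).symm)).trans
    (ψ.quotKerEquivOfSurjective hψ)

theorem nonempty_equiv_of_map_eq {Z B : Submodule R U} {Z' B' : Submodule R U'} (Φ : U →ₗ[R] U')
    (hΦ : ∀ z ∈ Z, ∀ b ∈ B, Φ z = Φ b → z = b) (hZ : Z.map Φ = Z') (hB : B.map Φ = B') :
    Nonempty (Subquotient Z B ≃ₗ[R] Subquotient Z' B') := by
  subst hZ hB
  let ψ : Z →ₗ[R] Z.map Φ := Φ.submoduleMap Z
  refine ⟨equivOfSurjective ((Submodule.mkQ _).comp ψ)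
    ((Submodule.mkQ_surjective _).comp (Φ.submoduleMap_surjective Z)) fun z => ?_⟩
  have mem_iff : ψ z ∈ (B.map Φ).submoduleOf (Z.map Φ) ↔ ∃ b ∈ B, Φ b = Φ z := Iff.rfl
  rw [LinearMap.comp_apply, Submodule.mkQ_apply, Submodule.Quotient.mk_eq_zero, mem_iff]
  constructor
  · rintro ⟨b, hb, hbz⟩
    rwa [hΦ z z.2 b hb hbz.symm]
  · exact fun hz => ⟨z, hz, rfl⟩

/-- Subquotients commute with binary products. -/
noncomputable def prodEquiv (Z B : Submodule R U) (Z' B' : Submodule R U') :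
    Subquotient (Z.prod Z') (B.prod B') ≃ₗ[R] Subquotient Z B × Subquotient Z' B' :=
  equivOfSurjective
    (((Submodule.mkQ _).prodMap (Submodule.mkQ _)).comp
      (((LinearMap.fst R U U').restrict (p := Z.prod Z') (q := Z) fun _ hz => hz.1).prod
        ((LinearMap.snd R U U').restrict (p := Z.prod Z') (q := Z') fun _ hz => hz.2)))
    (by
      rintro ⟨a, b⟩
      obtain ⟨x, rfl⟩ := Submodule.mkQ_surjective _ a
      obtain ⟨y, rfl⟩ := Submodule.mkQ_surjective _ b
      exact ⟨⟨(x, y), x.2, y.2⟩, rfl⟩)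
    (fun z => by
      rw [LinearMap.comp_apply, LinearMap.prodMap_apply, Prod.mk_eq_zero]
      exact and_congr (Submodule.Quotient.mk_eq_zero _) (Submodule.Quotient.mk_eq_zero _))

end Subquotient

end Subquotient

section AcyclicResolution

open CategoryTheory

variable {k G : Type} [CommRing k] [Group G]

lemma rep_shortExact_mk {A B C : Rep.{0} k G} {f : A ⟶ B} {g : B ⟶ C} (w : f ≫ g = 0)
    (hf : Function.Injective f.hom) (hg : Function.Surjective g.hom)
    (hfg : Function.Exact f.hom g.hom) : (ShortComplex.mk f g w).ShortExact where
  exact := by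
    rw [← ShortComplex.exact_map_iff_of_faithful _ (forget₂ (Rep.{0} k G) (ModuleCat.{0} k)),
      ShortComplex.moduleCat_exact_iff]
    exact fun b => (hfg b).1
  mono_f := (Rep.mono_iff_injective _).2 hf
  epi_g := (Rep.epi_iff_surjective _).2 hg

/-- The kernel of a morphism of representations, as a representation. -/
abbrev kernelRep {I J : Rep.{0} k G} (d : I ⟶ J) : Rep.{0} k G :=
  I.subrepresentation (LinearMap.ker d.hom.toLinearMap) fun g x hx => by
    rw [Submodule.mem_comap, LinearMap.mem_ker, Representation.IntertwiningMap.toLinearMap_apply,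
      d.hom.isIntertwining]
    exact (congrArg _ hx).trans (map_zero _)

/-- The factorisation through the kernel of `d` of a morphism `f` with `d ∘ f = 0`. -/
def kernelRepLift {A I J : Rep.{0} k G} (d : I ⟶ J) (f : A ⟶ I) (h : ∀ a, d.hom (f.hom a) = 0) :
    A ⟶ kernelRep d :=
  Rep.ofHom
    { f.hom.toLinearMap.codRestrict (LinearMap.ker d.hom.toLinearMap) h with
      isIntertwining' := fun g => LinearMap.ext fun x =>
        Subtype.ext (Representation.IntertwiningMap.isIntertwining _ _ f.hom g x) }

lemma shortExact_kernelRepLift {A I₀ I₁ I₂ : Rep.{0} k G} (ε : A ⟶ I₀) (d₀ : I₀ ⟶ I₁)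
    (d₁ : I₁ ⟶ I₂) (hε : Function.Injective ε.hom) (h₀ : Function.Exact ε.hom d₀.hom)
    (h₁ : Function.Exact d₀.hom d₁.hom) :
    ∃ w : ε ≫ kernelRepLift d₁ d₀ h₁.apply_apply_eq_zero = 0,
      (ShortComplex.mk ε (kernelRepLift d₁ d₀ h₁.apply_apply_eq_zero) w).ShortExact := by
  have w : ε ≫ kernelRepLift d₁ d₀ h₁.apply_apply_eq_zero = 0 :=
    Rep.hom_ext (Representation.IntertwiningMap.ext (LinearMap.ext fun a =>
      Subtype.ext (h₀.apply_apply_eq_zero a)))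
  refine ⟨w, rep_shortExact_mk w hε ?_ fun b => Subtype.ext_iff.trans (h₀ b)⟩
  rintro ⟨x, hx⟩
  obtain ⟨y, rfl⟩ := (h₁ x).1 hx
  exact ⟨y, rfl⟩

lemma map_subtype_invariants_kernelRep {I J : Rep.{0} k G} (d : I ⟶ J) :
    (kernelRep d).ρ.invariants.map (Submodule.subtype _) =
      I.ρ.invariants ⊓ LinearMap.ker d.hom.toLinearMap := by
  ext x
  constructor
  · rintro ⟨⟨x, hx⟩, hinv, rfl⟩
    exact ⟨fun g => congrArg Subtype.val (hinv g), hx⟩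
  · exact fun hx => ⟨⟨x, hx.2⟩, fun g => Subtype.ext (hx.1 g), rfl⟩

/-- In degree one, dimension shifting computes cohomology from invariants, because the connecting
map `C^G = H⁰(G, C) → H¹(G, A)` is onto with kernel the image of `I^G`. -/
theorem nonempty_groupCohomology_one_equiv {A I C : Rep.{0} k G} {f : A ⟶ I} {g : I ⟶ C}
    {w : f ≫ g = 0} (hX : (ShortComplex.mk f g w).ShortExact)
    (hI : Limits.IsZero (groupCohomology I 1)) :
    Nonempty (Subquotient C.ρ.invariants (I.ρ.invariants.map g.hom.toLinearMap) ≃ₗ[k]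
      groupCohomology A 1) := by
  let δ : C.ρ.invariants →ₗ[k] groupCohomology A 1 :=
    ((groupCohomology.H0Iso C).inv ≫ groupCohomology.δ hX 0 1 rfl).hom
  have δ_surjective : Function.Surjective δ := by
    have := groupCohomology.epi_δ_of_isZero hX 0 hI
    exact (ModuleCat.epi_iff_surjective _).1 (epi_comp _ _)
  have exact_δ := (ShortComplex.moduleCat_exact_iff _).1
    (groupCohomology.mapShortComplex₃_exact hX (i := 0) (j := 1) rfl)
  have map_H0Iso (y : groupCohomology I 0) :
      ((groupCohomology.H0Iso C).hom (groupCohomology.map (MonoidHom.id G) g 0 y)).1 =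
        g.hom ((groupCohomology.H0Iso I).hom y).1 :=
    congrArg (fun q => (q.hom y).1) (groupCohomology.map_id_comp_H0Iso_hom g)
  refine ⟨Subquotient.equivOfSurjective δ δ_surjective fun z => ⟨fun hz => ?_, ?_⟩⟩
  · obtain ⟨y, hy⟩ := exact_δ _ hz
    refine ⟨_, ((groupCohomology.H0Iso I).hom y).2, (map_H0Iso y).symm.trans ?_⟩
    exact (congrArg (fun c => ((groupCohomology.H0Iso C).hom c).1) hy).trans
      (congrArg Subtype.val ((groupCohomology.H0Iso C).toLinearEquiv.apply_symm_apply z))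
  · rintro ⟨y, hy, hyz⟩
    let y' := (groupCohomology.H0Iso I).inv ⟨y, hy⟩
    have z_eq : (groupCohomology.H0Iso C).inv z = groupCohomology.map (MonoidHom.id G) g 0 y' := by
      refine (groupCohomology.H0Iso C).toLinearEquiv.symm_apply_eq.2 (Subtype.ext ?_)
      refine hyz.symm.trans (Eq.trans ?_ (map_H0Iso y').symm)
      exact congrArg (fun c => g.hom (Subtype.val c))
        ((groupCohomology.H0Iso I).toLinearEquiv.apply_symm_apply ⟨y, hy⟩).symm
    refine (congrArg (groupCohomology.δ hX 0 1 rfl).hom z_eq).trans ?_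
    exact congrArg (fun q => q.hom y')
      (groupCohomology.mapShortComplex₃ hX (i := 0) (j := 1) rfl).zero

/-- The induction shifts the resolution by one step, replacing `A` by the kernel of `d 1`. -/
theorem nonempty_groupCohomology_equiv_of_acyclic_resolution (n : ℕ) {A : Rep.{0} k G}
    {I : ℕ → Rep.{0} k G} (ε : A ⟶ I 0) (d : ∀ n, I n ⟶ I (n + 1))
    (hε : Function.Injective ε.hom) (h₀ : Function.Exact ε.hom (d 0).hom)
    (hd : ∀ n, Function.Exact (d n).hom (d (n + 1)).hom)
    (hI : ∀ n m, Limits.IsZero (groupCohomology (I n) (m + 1))) :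
    Nonempty (Subquotient ((I (n + 1)).ρ.invariants ⊓ LinearMap.ker (d (n + 1)).hom.toLinearMap)
      ((I n).ρ.invariants.map (d n).hom.toLinearMap) ≃ₗ[k] groupCohomology A (n + 1)) := by
  induction n generalizing A I with
  | zero =>
    obtain ⟨w, hX⟩ := shortExact_kernelRepLift ε (d 0) (d 1) hε h₀ (hd 0)
    obtain ⟨e⟩ := nonempty_groupCohomology_one_equiv hX (hI 0 0)
    obtain ⟨e'⟩ := Subquotient.nonempty_equiv_of_map_eq _ (fun _ _ _ _ h => Subtype.ext h)
      (map_subtype_invariants_kernelRep (d 1))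
      (Submodule.map_comp (kernelRepLift (d 1) (d 0) (hd 0).apply_apply_eq_zero).hom.toLinearMap
        (Submodule.subtype _) (I 0).ρ.invariants).symm
    exact ⟨e'.symm.trans e⟩
  | succ n ih =>
    obtain ⟨w, hX⟩ := shortExact_kernelRepLift ε (d 0) (d 1) hε h₀ (hd 0)
    have := groupCohomology.isIso_δ_of_isZero hX (n + 1) (hI 0 n) (hI 0 (n + 1))
    obtain ⟨e⟩ := ih (Rep.subtype _ _ _ : kernelRep (d 1) ⟶ I 1) (fun m => d (m + 1))
      Subtype.val_injective (fun x => by simp [LinearMap.mem_ker])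
      (fun m => hd (m + 1)) (fun m => hI (m + 1))
    exact ⟨e.trans (asIso (groupCohomology.δ hX (n + 1) (n + 2) rfl)).toLinearEquiv⟩

/-- Through the coaction `a ↦ (g ↦ g a)`, the map `p` makes `A` a retract of the coinduced
representation `G → A`. -/
theorem isZero_groupCohomology_succ_of_retraction {A : Rep.{0} k G} (p : (G → A) →ₗ[k] A)
    (hp : ∀ g F, p (fun h => F (h * g)) = A.ρ g (p F))
    (hp_coaction : ∀ a, p (fun h => A.ρ h a) = a) (n : ℕ) :
    Limits.IsZero (groupCohomology A (n + 1)) := by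
  let W : Rep.{0} k (⊥ : Subgroup G) := Rep.trivial k _ A
  let J : Rep.{0} k G := Rep.coind (⊥ : Subgroup G).subtype W
  let F := groupCohomology.functor k G (n + 1)
  have hJ : Limits.IsZero (F.obj J) :=
    (isZero_groupCohomology_succ_of_subsingleton W n).of_iso (groupCohomology.coindIso W (n + 1))
  let i : A ⟶ J := Rep.ofHom
    { toFun := fun a => ⟨fun h => A.ρ h a, fun b h => by
        rw [Subsingleton.elim b 1, map_one, map_one, one_mul]; rfl⟩
      map_add' := fun a b => Subtype.ext (funext fun h => map_add _ a b)
      map_smul' := fun c a => Subtype.ext (funext fun h => map_smul _ c a)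
      isIntertwining' := fun g => LinearMap.ext fun a => Subtype.ext (funext fun h =>
        (LinearMap.congr_fun (map_mul A.ρ h g) a).symm) }
  let r : J ⟶ A := Rep.ofHom
    { p.comp (Submodule.subtype _) with
      isIntertwining' := fun g => LinearMap.ext fun F => hp g F.1 }
  let retract : Retract A J :=
    ⟨i, r, Rep.hom_ext (Representation.IntertwiningMap.ext (LinearMap.ext hp_coaction))⟩
  exact (.of_mono (retract.map F).i hJ : Limits.IsZero (F.obj A))

end AcyclicResolution

section CubicalCochains

/-- The cells of the tiling of `ℝ^d` by cubes with vertices `(2ℤ)^d`, each cell being named by its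
barycentre: an odd coordinate is a direction in which the cell extends. -/
abbrev Cell (d : ℕ) : Type := Fin d → ℤ

variable {d : ℕ} {A : Type*} [AddCommGroup A]

namespace Cell

/-- The dimension of a cell. -/
def dim (y : Cell d) : ℕ := Finset.card {i | Odd (y i)}

/-- The incidence sign of the pair of faces of `y` in the direction `i`. -/
def incidence (i : Fin d) (y : Cell d) : ℤˣ := (∑ j, if j < i then y j else 0).negOnePow

lemma dim_cons (a : ℤ) (z : Cell d) :
    dim (Fin.cons a z : Cell (d + 1)) = (if Odd a then 1 else 0) + dim z := by
  simp only [dim, Finset.card_filter, Fin.sum_univ_succ, Fin.cons_zero, Fin.cons_succ]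

lemma dim_snoc (z : Cell d) (a : ℤ) :
    dim (Fin.snoc z a : Cell (d + 1)) = dim z + if Odd a then 1 else 0 := by
  simp only [dim, Finset.card_filter, Fin.sum_univ_castSucc, Fin.snoc_castSucc, Fin.snoc_last]

lemma odd_add_two_nsmul_apply (y z : Cell d) (i : Fin d) : Odd ((y + 2 • z) i) ↔ Odd (y i) := by
  simp [parity_simps]

lemma dim_add_two_nsmul (y z : Cell d) : dim (y + 2 • z) = dim y := by
  simp only [dim, odd_add_two_nsmul_apply]

lemma dim_sub_two_nsmul (y z : Cell d) : dim (y - 2 • z) = dim y := by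
  rw [sub_eq_add_neg, ← smul_neg, dim_add_two_nsmul]

lemma dim_eq_add_one {y y' : Cell d} {i : Fin d} (hi : Odd (y i)) (hi' : Even (y' i))
    (h : ∀ j ≠ i, y' j = y j) : dim y = dim y' + 1 := by
  have insert_eq : ({j | Odd (y j)} : Finset (Fin d)) = insert i ({j | Odd (y' j)} : Finset _) := by
    ext j
    by_cases hj : j = i
    · simp [hj, hi]
    · simp [hj, h j hj]
  rw [dim, insert_eq, Finset.card_insert_of_notMem (by simpa using hi'), dim]

lemma dim_add_single {y : Cell d} {i : Fin d} (hi : Odd (y i)) :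
    dim y = dim (y + Pi.single i 1) + 1 :=
  dim_eq_add_one hi (by simpa using hi.add_one) fun j hj => by simp [hj]

lemma dim_sub_single {y : Cell d} {i : Fin d} (hi : Odd (y i)) :
    dim y = dim (y - Pi.single i 1) + 1 :=
  dim_eq_add_one hi (by simpa using hi.sub_odd odd_one) fun j hj => by simp [hj]

lemma incidence_cons_zero (a : ℤ) (z : Cell d) :
    incidence 0 (Fin.cons a z : Cell (d + 1)) = 1 := by
  simp [incidence]

lemma incidence_cons_succ (i : Fin d) (a : ℤ) (z : Cell d) :
    incidence i.succ (Fin.cons a z : Cell (d + 1)) = a.negOnePow * incidence i z := by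
  simp [incidence, Fin.sum_univ_succ, Int.negOnePow_add]

lemma incidence_snoc_castSucc (i : Fin d) (z : Cell d) (a : ℤ) :
    incidence i.castSucc (Fin.snoc z a : Cell (d + 1)) = incidence i z := by
  simp [incidence, Fin.sum_univ_castSucc, not_lt.2 (Fin.le_last _)]

lemma incidence_add_two_nsmul (i : Fin d) (y z : Cell d) :
    incidence i (y + 2 • z) = incidence i y := by
  rw [incidence, incidence, Int.negOnePow_eq_iff, ← Finset.sum_sub_distrib]
  refine Finset.even_sum _ fun j _ => ?_
  split_ifs <;> simp

end Cell

open Cell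

variable (d A) in
/-- The cubical coboundary operator on cochains of all dimensions, with coefficients in `A`. -/
def coboundary : Module.End ℤ (Cell d → A) where
  toFun F y := ∑ i, if Odd (y i) then
    incidence i y • (F (y + Pi.single i 1) - F (y - Pi.single i 1)) else 0
  map_add' F F' := funext fun y => by
    simp only [Pi.add_apply, ← Finset.sum_add_distrib, ite_add_ite, add_zero, ← smul_add,
      add_sub_add_comm]
  map_smul' c F := funext fun y => by
    simp only [Pi.smul_apply, ← smul_sub, smul_comm _ c, RingHom.id_apply, Finset.smul_sum,
      smul_ite, smul_zero]

lemma coboundary_apply (F : Cell d → A) (y : Cell d) :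
    coboundary d A F y = ∑ i, if Odd (y i) then
      incidence i y • (F (y + Pi.single i 1) - F (y - Pi.single i 1)) else 0 := rfl

lemma coboundary_congr {F F' : Cell d → A} {y : Cell d}
    (h : ∀ z, dim y = dim z + 1 → F z = F' z) : coboundary d A F y = coboundary d A F' y := by
  rw [coboundary_apply, coboundary_apply]
  refine Finset.sum_congr rfl fun i _ => ?_
  split_ifs with hi
  · rw [h _ (dim_add_single hi), h _ (dim_sub_single hi)]
  · rfl

lemma coboundary_add_two_nsmul {F : Cell d → A} {z : Cell d} (hF : ∀ y, F (y + 2 • z) = F y)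
    (y : Cell d) : coboundary d A F (y + 2 • z) = coboundary d A F y := by
  simp only [coboundary_apply, odd_add_two_nsmul_apply, incidence_add_two_nsmul,
    add_right_comm y, add_sub_right_comm y, hF]

lemma coboundary_cons (F : Cell (d + 1) → A) (a : ℤ) (z : Cell d) :
    coboundary (d + 1) A F (Fin.cons a z) =
      (if Odd a then F (Fin.cons (a + 1) z) - F (Fin.cons (a - 1) z) else 0) +
        a.negOnePow • coboundary d A (fun w => F (Fin.cons a w)) z := by
  have add_single_zero (c : ℤ) : (Fin.cons a z : Cell (d + 1)) + Pi.single 0 c =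
      Fin.cons (a + c) z := by
    ext j; cases j using Fin.cases <;> simp
  have add_single_succ (i : Fin d) (c : ℤ) : (Fin.cons a z : Cell (d + 1)) + Pi.single i.succ c =
      Fin.cons a (z + Pi.single i c) := by
    ext j; cases j using Fin.cases <;> simp [Pi.single_apply]
  simp only [coboundary_apply, Fin.sum_univ_succ, Fin.cons_zero, Fin.cons_succ, sub_eq_add_neg,
    ← Pi.single_neg, add_single_zero, add_single_succ, incidence_cons_zero, incidence_cons_succ,
    one_smul, Finset.smul_sum, smul_ite, smul_zero, mul_smul]

lemma coboundary_cons_of_even (F : Cell (d + 1) → A) {a : ℤ} (ha : Even a) (z : Cell d) :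
    coboundary (d + 1) A F (Fin.cons a z) = coboundary d A (fun w => F (Fin.cons a w)) z := by
  rw [coboundary_cons, if_neg (Int.not_odd_iff_even.2 ha), Int.negOnePow_even a ha, zero_add,
    one_smul]

lemma coboundary_cons_of_odd (F : Cell (d + 1) → A) {a : ℤ} (ha : Odd a) (z : Cell d) :
    coboundary (d + 1) A F (Fin.cons a z) = F (Fin.cons (a + 1) z) - F (Fin.cons (a - 1) z) -
      coboundary d A (fun w => F (Fin.cons a w)) z := by
  rw [coboundary_cons, if_pos ha, Int.negOnePow_odd a ha, Units.neg_smul, one_smul,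
    ← sub_eq_add_neg]

lemma coboundary_snoc {F : Cell (d + 1) → A}
    (hF : ∀ z a, F (Fin.snoc z (a + 2)) = F (Fin.snoc z a)) (z : Cell d) (a : ℤ) :
    coboundary (d + 1) A F (Fin.snoc z a) = coboundary d A (fun w => F (Fin.snoc w a)) z := by
  have add_single_last (c : ℤ) : (Fin.snoc z a : Cell (d + 1)) + Pi.single (Fin.last d) c =
      Fin.snoc z (a + c) := by
    ext j; cases j using Fin.lastCases <;> simp
  have add_single_castSucc (i : Fin d) (c : ℤ) : (Fin.snoc z a : Cell (d + 1)) +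
      Pi.single i.castSucc c = Fin.snoc (z + Pi.single i c) a := by
    ext j; cases j using Fin.lastCases <;> simp [Pi.single_apply]
  have opposite_faces : F (Fin.snoc z (a + 1)) = F (Fin.snoc z (a + -1)) := by
    rw [← hF z (a + -1), add_assoc]; rfl
  simp only [coboundary_apply, Fin.sum_univ_castSucc, Fin.snoc_castSucc, Fin.snoc_last,
    sub_eq_add_neg, ← Pi.single_neg, add_single_last, add_single_castSucc,
    incidence_snoc_castSucc, opposite_faces]
  simp

theorem coboundary_coboundary (F : Cell d → A) : coboundary d A (coboundary d A F) = 0 := by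
  induction d with
  | zero => ext y; simp [coboundary_apply]
  | succ d ih =>
    ext y
    cases y using Fin.consCases with | _ a z
    rcases Int.even_or_odd a with ha | ha
    · simp only [coboundary_cons_of_even _ ha]
      exact congrFun (ih _) z
    · have slice_eq : (fun w => coboundary (d + 1) A F (Fin.cons a w)) =
          (fun w => F (Fin.cons (a + 1) w)) - (fun w => F (Fin.cons (a - 1) w)) -
            coboundary d A fun w => F (Fin.cons a w) :=
        funext (coboundary_cons_of_odd F ha)
      rw [coboundary_cons_of_odd _ ha, slice_eq, coboundary_cons_of_even _ ha.add_one,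
        coboundary_cons_of_even _ (ha.sub_odd odd_one), map_sub, map_sub, ih]
      simp

/-- The sum `u 0 + ⋯ + u (n - 1)`, continued to negative `n` so that its increments are `u`. -/
def telescope (u : ℤ → A) : ℤ → A
  | Int.ofNat n => ∑ i ∈ Finset.range n, u i
  | Int.negSucc n => -∑ i ∈ Finset.range (n + 1), u (-(i : ℤ) - 1)

lemma telescope_add_one (u : ℤ → A) (n : ℤ) : telescope u (n + 1) - telescope u n = u n := by
  match n with
  | Int.ofNat n => exact sub_eq_of_eq_add' (Finset.sum_range_succ _ n)
  | Int.negSucc 0 => simp [telescope]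
  | Int.negSucc (n + 1) =>
    have index_eq : Int.negSucc (n + 1) = -((n + 1 : ℕ) : ℤ) - 1 := by omega
    change telescope u (Int.negSucc n) - _ = _
    rw [telescope, telescope, Finset.sum_range_succ _ (n + 1), index_eq]
    abel

/-- The cochain `F` is concentrated on the cells of dimension `m`. -/
def IsHomogeneous (m : ℕ) (F : Cell d → A) : Prop := ∀ y, dim y ≠ m → F y = 0

lemma isHomogeneous_coboundary {m : ℕ} {F : Cell d → A} (hF : IsHomogeneous m F) :
    IsHomogeneous (m + 1) (coboundary d A F) := fun y hy => by
  rw [coboundary_congr (F' := 0) fun z hz => hF z (by omega), map_zero, Pi.zero_apply]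

/-- Integration of a cochain along the first coordinate, starting at `0`. -/
def primitive (F : Cell (d + 1) → A) (y : Cell (d + 1)) : A :=
  if Even (y 0) then telescope (fun t => F (Fin.cons (2 * t + 1) (Fin.tail y))) (y 0 / 2) else 0

/-- The pull-back of a cochain under the projection that forgets the first coordinate. -/
def pullback (u : Cell d → A) (y : Cell (d + 1)) : A := if Even (y 0) then u (Fin.tail y) else 0

lemma primitive_cons (F : Cell (d + 1) → A) (a : ℤ) (z : Cell d) :
    primitive F (Fin.cons a z) =
      if Even a then telescope (fun t => F (Fin.cons (2 * t + 1) z)) (a / 2) else 0 := rfl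

lemma pullback_cons (u : Cell d → A) (a : ℤ) (z : Cell d) :
    pullback u (Fin.cons a z) = if Even a then u z else 0 := rfl

lemma isHomogeneous_primitive {m : ℕ} {F : Cell (d + 1) → A} (hF : IsHomogeneous (m + 1) F) :
    IsHomogeneous m (primitive F) := by
  intro y hy
  cases y using Fin.consCases with | _ a z
  rw [primitive_cons]
  split_ifs with ha
  · have slice_eq_zero (t : ℤ) : F (Fin.cons (2 * t + 1) z) = 0 := hF _ <| by
      rw [dim_cons, if_neg (Int.not_odd_iff_even.2 ha)] at hy
      rw [dim_cons, if_pos (odd_two_mul_add_one t)]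
      omega
    simp only [slice_eq_zero]
    cases a / 2 <;> simp [telescope]
  · rfl

lemma isHomogeneous_pullback {m : ℕ} {u : Cell d → A} (hu : IsHomogeneous m u) :
    IsHomogeneous m (pullback u) := by
  intro y hy
  cases y using Fin.consCases with | _ a z
  rw [pullback_cons]
  split_ifs with ha
  · exact hu z (by simpa [dim_cons, Int.not_odd_iff_even.2 ha] using hy)
  · rfl

lemma isHomogeneous_slice {m : ℕ} {F : Cell (d + 1) → A} (hF : IsHomogeneous m F) :
    IsHomogeneous m fun z => F (Fin.cons 0 z) :=
  fun z hz => hF _ (by simpa [dim_cons] using hz)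

lemma coboundary_primitive_cons_of_odd (F : Cell (d + 1) → A) {a : ℤ} (ha : Odd a) (z : Cell d) :
    coboundary (d + 1) A (primitive F) (Fin.cons a z) = F (Fin.cons a z) := by
  have slice_eq_zero : (fun w => primitive F (Fin.cons a w)) = 0 :=
    funext fun w => if_neg (Int.not_even_iff_odd.2 ha)
  rw [coboundary_cons_of_odd _ ha, slice_eq_zero, map_zero, primitive_cons, primitive_cons,
    if_pos ha.add_one, if_pos (ha.sub_odd odd_one)]
  obtain ⟨t, rfl⟩ := ha
  rw [show (2 * t + 1 + 1) / 2 = t + 1 by omega, show (2 * t + 1 - 1) / 2 = t by omega,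
    telescope_add_one]
  exact sub_zero _

lemma coboundary_pullback (u : Cell d → A) :
    coboundary (d + 1) A (pullback u) = pullback (coboundary d A u) := by
  ext y
  cases y using Fin.consCases with | _ a z
  rcases Int.even_or_odd a with ha | ha
  · simp only [coboundary_cons_of_even _ ha, pullback_cons, if_pos ha]
  · have slice_eq_zero : (fun w => pullback u (Fin.cons a w)) = 0 :=
      funext fun w => if_neg (Int.not_even_iff_odd.2 ha)
    rw [coboundary_cons_of_odd _ ha, slice_eq_zero]
    simp [pullback_cons, ha.add_one, ha.sub_odd odd_one, Int.not_even_iff_odd.2 ha]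

lemma coboundary_slice_zero {F : Cell (d + 1) → A} (hF : coboundary (d + 1) A F = 0) :
    coboundary d A (fun z => F (Fin.cons 0 z)) = 0 :=
  funext fun z => (coboundary_cons_of_even F Even.zero z).symm.trans (congrFun hF _)

lemma eq_pullback_of_coboundary_eq_zero {F : Cell (d + 1) → A} (hF : coboundary (d + 1) A F = 0)
    (hodd : ∀ a z, Odd a → F (Fin.cons a z) = 0) : F = pullback fun z => F (Fin.cons 0 z) := by
  ext y
  cases y using Fin.consCases with | _ a z
  rw [pullback_cons]
  split_ifs with ha
  · have step (t : ℤ) : F (Fin.cons (2 * (t + 1)) z) = F (Fin.cons (2 * t) z) := by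
      have odd_t : Odd (2 * t + 1) := odd_two_mul_add_one t
      have closed := congrFun hF (Fin.cons (2 * t + 1) z)
      rw [coboundary_cons_of_odd _ odd_t, funext fun w => hodd _ w odd_t] at closed
      rw [mul_add_one, ← sub_eq_zero]
      simpa [add_assoc] using (sub_eq_zero.1 closed).trans (congrFun (map_zero _) z)
    obtain ⟨t, rfl⟩ := ha.two_dvd
    induction t using Int.induction_on with
    | zero => rfl
    | succ t ih => rw [step, ih (even_two_mul _)]
    | pred t ih => rw [← step, sub_add_cancel, ih (even_two_mul _)]
  · exact hodd a z (Int.not_even_iff_odd.1 ha)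

theorem IsHomogeneous.exists_coboundary_eq {m : ℕ} {F : Cell d → A}
    (hF : IsHomogeneous (m + 1) F) (hclosed : coboundary d A F = 0) :
    ∃ u, IsHomogeneous m u ∧ coboundary d A u = F := by
  induction d with
  | zero => exact ⟨0, fun _ _ => rfl, by ext y; simp [hF y (by simp [dim])]⟩
  | succ d ih =>
    set F' := F - coboundary (d + 1) A (primitive F) with F'_def
    have hF' : coboundary (d + 1) A F' = 0 := by
      rw [F'_def, map_sub, hclosed, coboundary_coboundary, sub_zero]
    have F'_homogeneous : IsHomogeneous (m + 1) F' := fun y hy => by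
      rw [F'_def, Pi.sub_apply, hF y hy,
        isHomogeneous_coboundary (isHomogeneous_primitive hF) y hy, sub_zero]
    have F'_eq_pullback : F' = pullback fun z => F' (Fin.cons 0 z) :=
      eq_pullback_of_coboundary_eq_zero hF' fun a z ha =>
        sub_eq_zero.2 (coboundary_primitive_cons_of_odd F ha z).symm
    obtain ⟨u, hu, hu'⟩ := ih (isHomogeneous_slice F'_homogeneous) (coboundary_slice_zero hF')
    refine ⟨primitive F + pullback u, ?_, ?_⟩
    · intro y hy
      rw [Pi.add_apply, isHomogeneous_primitive hF y hy,
        isHomogeneous_pullback hu y hy, add_zero]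
    · rw [map_add, coboundary_pullback, hu', ← F'_eq_pullback, F'_def, add_sub_cancel]

theorem IsHomogeneous.eq_apply_zero {F : Cell d → A} (hF : IsHomogeneous 0 F)
    (hclosed : coboundary d A F = 0) {y : Cell d} (hy : dim y = 0) : F y = F 0 := by
  induction d with
  | zero => exact congrArg F (Subsingleton.elim _ _)
  | succ d ih =>
    have F_eq_pullback := eq_pullback_of_coboundary_eq_zero hclosed fun a z ha =>
      hF _ (by simp [dim_cons, ha])
    cases y using Fin.consCases with | _ a z
    obtain ⟨ha, hz⟩ : ¬ Odd a ∧ dim z = 0 := by simpa [dim_cons] using hy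
    have slice_eq := ih (isHomogeneous_slice hF) (coboundary_slice_zero hclosed) hz
    calc F (Fin.cons a z) = F (Fin.cons 0 z) :=
          (congrFun F_eq_pullback _).trans (if_pos (Int.not_odd_iff_even.1 ha))
      _ = F (Fin.cons 0 0) := slice_eq
      _ = F 0 := congrArg F (Fin.cons_self_tail (0 : Cell (d + 1)))

end CubicalCochains

open Cell

section TotalComplex

variable {d : ℕ} {A : Type*} [AddCommGroup A]

/-- The differential of degree `n` in the total complex of the double complex whose columns are
copies of the cubical cochain complex and whose rows are `A →T A →N A →T ⋯`. An element of degree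
`n` of this total complex is a single cochain `f` supported in dimensions `≤ n`: its component on
the `m`-cells lies in the column `n - m`. -/
def totalDiff (N T : Module.End ℤ (Cell d → A)) (n : ℤ) : Module.End ℤ (Cell d → A) where
  toFun f y :=
    if Even (n + 1 + dim y) then N f y + coboundary d A f y else T f y - coboundary d A f y
  map_add' f g := funext fun y => by
    simp only [map_add, Pi.add_apply]
    split_ifs <;> abel
  map_smul' c f := funext fun y => by
    simp only [map_smul, Pi.smul_apply, RingHom.id_apply]
    split_ifs <;> simp only [smul_add, smul_sub]

variable (d A) in
/-- The cochains that vanish on all cells of dimension greater than `n`. -/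
def suppLE (n : ℤ) : Submodule ℤ (Cell d → A) where
  carrier := {f | ∀ y, n < dim y → f y = 0}
  add_mem' hf hg y hy := by rw [Pi.add_apply, hf y hy, hg y hy, add_zero]
  zero_mem' _ _ := rfl
  smul_mem' c f hf y hy := by rw [Pi.smul_apply, hf y hy, smul_zero]

/-- The operator `X` preserves the dimension of the support of a cochain. -/
def IsDimLocal (X : Module.End ℤ (Cell d → A)) : Prop :=
  ∀ ⦃f y⦄, (∀ z, dim z = dim y → f z = 0) → X f y = 0

variable (d A) in
/-- The cochains that are constant on the vertices and vanish on all other cells. -/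
def vertexConst : A →ₗ[ℤ] (Cell d → A) where
  toFun c y := if dim y = 0 then c else 0
  map_add' c c' := funext fun y => by simp only [Pi.add_apply, ite_add_ite, add_zero]
  map_smul' r c := funext fun y => by simp only [Pi.smul_apply, smul_ite, smul_zero, eq_intCast,
    Int.cast_eq]

lemma suppLE_mono {m n : ℤ} (h : m ≤ n) : suppLE d A m ≤ suppLE d A n :=
  fun _ hf y hy => hf y (h.trans_lt hy)

lemma IsDimLocal.congr {X : Module.End ℤ (Cell d → A)} (hX : IsDimLocal X) {f g : Cell d → A}
    {y : Cell d} (h : ∀ z, dim z = dim y → f z = g z) : X f y = X g y := by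
  rw [← sub_eq_zero, ← Pi.sub_apply, ← map_sub]
  exact hX fun z hz => sub_eq_zero.2 (h z hz)

lemma vertexConst_apply (c : A) (y : Cell d) :
    vertexConst d A c y = if dim y = 0 then c else 0 := rfl

lemma vertexConst_injective : Function.Injective (vertexConst d A) := fun c c' h => by
  simpa [vertexConst_apply, dim] using congrFun h 0

lemma vertexConst_mem_suppLE (c : A) : vertexConst d A c ∈ suppLE d A 0 :=
  fun _ hy => if_neg (by omega)

lemma coboundary_vertexConst (c : A) : coboundary d A (vertexConst d A c) = 0 := by
  ext y
  rw [coboundary_apply]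
  refine Finset.sum_eq_zero fun i _ => ?_
  split_ifs with hi
  · have dim_faces : dim (y + Pi.single i 1) = dim (y - Pi.single i 1) := by
      have := dim_add_single hi
      have := dim_sub_single hi
      omega
    rw [vertexConst_apply, vertexConst_apply, dim_faces, sub_self, smul_zero]
  · rfl

variable {N T : Module.End ℤ (Cell d → A)} {n : ℤ}

lemma totalDiff_apply_of_even {y : Cell d} (h : Even (n + 1 + dim y)) (f : Cell d → A) :
    totalDiff N T n f y = N f y + coboundary d A f y := if_pos h

lemma totalDiff_apply_of_odd {y : Cell d} (h : Odd (n + 1 + dim y)) (f : Cell d → A) :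
    totalDiff N T n f y = T f y - coboundary d A f y := if_neg (Int.not_even_iff_odd.2 h)

lemma totalDiff_apply_of_locally_zero (hN : IsDimLocal N) (hT : IsDimLocal T) {f : Cell d → A}
    {y : Cell d} (hf : ∀ z, dim z = dim y → f z = 0) :
    totalDiff N T n f y = (n + 1 + dim y).negOnePow • coboundary d A f y := by
  rcases Int.even_or_odd (n + 1 + dim y) with h | h
  · rw [totalDiff_apply_of_even h, hN hf, zero_add, Int.negOnePow_even _ h, one_smul]
  · rw [totalDiff_apply_of_odd h, hT hf, zero_sub, Int.negOnePow_odd _ h, Units.neg_smul, one_smul]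

lemma totalDiff_mem_suppLE (hN : IsDimLocal N) (hT : IsDimLocal T) {f : Cell d → A}
    (hf : f ∈ suppLE d A n) : totalDiff N T n f ∈ suppLE d A (n + 1) := by
  intro y hy
  rw [totalDiff_apply_of_locally_zero hN hT fun z hz => hf z (by omega),
    coboundary_congr (F' := 0) fun z hz => hf z (by omega), map_zero, Pi.zero_apply, smul_zero]

theorem totalDiff_totalDiff (hN : IsDimLocal N) (hT : IsDimLocal T)
    (hNδ : Commute N (coboundary d A)) (hTδ : Commute T (coboundary d A))
    (hNT : N * T = 0) (hTN : T * N = 0) (f : Cell d → A) :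
    totalDiff N T (n + 1) (totalDiff N T n f) = 0 := by
  have N_δ : N (coboundary d A f) = coboundary d A (N f) := congrArg (· f) hNδ
  have T_δ : T (coboundary d A f) = coboundary d A (T f) := congrArg (· f) hTδ
  have N_T : N (T f) = 0 := congrArg (· f) hNT
  have T_N : T (N f) = 0 := congrArg (· f) hTN
  ext y
  rcases Int.even_or_odd (n + 1 + 1 + dim y) with h | h
  · rw [totalDiff_apply_of_even h,
      hN.congr (g := T f - coboundary d A f) fun z hz => totalDiff_apply_of_odd (by grind) f,
      coboundary_congr (F' := N f + coboundary d A f) fun z hz =>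
        totalDiff_apply_of_even (by grind) f]
    simp [N_δ, N_T, coboundary_coboundary]
  · rw [totalDiff_apply_of_odd h,
      hT.congr (g := N f + coboundary d A f) fun z hz => totalDiff_apply_of_even (by grind) f,
      coboundary_congr (F' := T f - coboundary d A f) fun z hz =>
        totalDiff_apply_of_odd (by grind) f]
    simp [T_δ, T_N, coboundary_coboundary]

/-- The component of a cochain on the cells of dimension `m`. -/
def component (m : ℕ) (f : Cell d → A) (y : Cell d) : A := if dim y = m then f y else 0

lemma isHomogeneous_component (m : ℕ) (f : Cell d → A) : IsHomogeneous m (component m f) :=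
  fun _ hy => if_neg hy

lemma coboundary_component_eq_zero (hN : IsDimLocal N) (hT : IsDimLocal T) {m : ℕ}
    {f : Cell d → A} (hf : f ∈ suppLE d A m) (hclosed : totalDiff N T n f = 0) :
    coboundary d A (component m f) = 0 := by
  ext y
  by_cases hy : dim y = m + 1
  · have closed := congrFun hclosed y
    rw [totalDiff_apply_of_locally_zero hN hT fun z hz => hf z (by omega), Pi.zero_apply,
      smul_eq_zero_iff_eq] at closed
    exact (coboundary_congr fun z hz => if_pos (by omega)).trans closed
  · exact isHomogeneous_coboundary (isHomogeneous_component m f) y hy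

/-- Subtracting the differential of a cochain that bounds the top component of a cocycle lowers the
dimension of its support. -/
lemma exists_sub_totalDiff_mem_suppLE (hN : IsDimLocal N) (hT : IsDimLocal T) {m : ℕ}
    {f : Cell d → A} (hf : f ∈ suppLE d A (m + 1)) (hclosed : totalDiff N T (n + 1) f = 0) :
    ∃ g ∈ suppLE d A m, f - totalDiff N T n g ∈ suppLE d A m := by
  obtain ⟨u, hu, hu'⟩ := (isHomogeneous_component (m + 1) f).exists_coboundary_eq
    (coboundary_component_eq_zero hN hT hf hclosed)
  refine ⟨(n + m).negOnePow • u, fun y hy => ?_, fun y hy => ?_⟩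
  · rw [Pi.smul_apply, hu y (by omega), smul_zero]
  · have u_eq_zero (z : Cell d) (hz : dim z = dim y) : ((n + m).negOnePow • u) z = 0 := by
      rw [Pi.smul_apply, hu z (by omega), smul_zero]
    rw [Pi.sub_apply, totalDiff_apply_of_locally_zero hN hT u_eq_zero, Units.smul_def
      (n + m).negOnePow, map_zsmul, ← Units.smul_def, Pi.smul_apply, hu', component]
    split_ifs with hy'
    · have sign_eq : (n + 1 + dim y).negOnePow = (n + m).negOnePow :=
        (Int.negOnePow_eq_iff _ _).2 ⟨1, by rw [hy']; push_cast; ring⟩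
      rw [sign_eq, smul_smul, Int.units_mul_self, one_smul, sub_self]
    · rw [hf y (by omega), smul_zero, smul_zero, sub_zero]

variable {ν τ : Module.End ℤ A}

lemma eq_vertexConst_of_totalDiff_eq_zero (hN : IsDimLocal N) (hT : IsDimLocal T)
    {f : Cell d → A} (hf : f ∈ suppLE d A 0) (hclosed : totalDiff N T n f = 0) :
    f = vertexConst d A (f 0) := by
  have f_homogeneous : IsHomogeneous 0 f := fun y hy => hf y (by omega)
  have f_eq_component : component 0 f = f := funext fun y => by
    by_cases hy : dim y = 0
    · exact if_pos hy
    · exact (if_neg hy).trans (f_homogeneous y hy).symm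
  have f_closed := coboundary_component_eq_zero hN hT hf hclosed
  rw [f_eq_component] at f_closed
  ext y
  rw [vertexConst_apply]
  split_ifs with hy
  · exact f_homogeneous.eq_apply_zero f_closed hy
  · exact f_homogeneous y hy

lemma totalDiff_vertexConst (hN : ∀ c, N (vertexConst d A c) = vertexConst d A (ν c))
    (hT : ∀ c, T (vertexConst d A c) = vertexConst d A (τ c)) (c : A) :
    totalDiff N T n (vertexConst d A c) =
      vertexConst d A (if Odd n then ν c else τ c) := by
  ext y
  rcases Int.even_or_odd (n + 1 + dim y) with h | h
  · rw [totalDiff_apply_of_even h, hN, coboundary_vertexConst, Pi.zero_apply, add_zero,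
      vertexConst_apply, vertexConst_apply]
    split_ifs <;> grind
  · rw [totalDiff_apply_of_odd h, hT, coboundary_vertexConst, Pi.zero_apply, sub_zero,
      vertexConst_apply, vertexConst_apply]
    split_ifs <;> grind

theorem exists_totalDiff_eq (hN : IsDimLocal N) (hT : IsDimLocal T)
    (hNδ : Commute N (coboundary d A)) (hTδ : Commute T (coboundary d A))
    (hNT : N * T = 0) (hTN : T * N = 0)
    (hNν : ∀ c, N (vertexConst d A c) = vertexConst d A (ν c))
    (hTτ : ∀ c, T (vertexConst d A c) = vertexConst d A (τ c))
    (hντ : Function.Exact ν τ) (hτν : Function.Exact τ ν) {n m : ℕ} (hmn : m ≤ n + 1)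
    {f : Cell d → A} (hf : f ∈ suppLE d A m) (hclosed : totalDiff N T (n + 1) f = 0) :
    ∃ g ∈ suppLE d A n, totalDiff N T n g = f := by
  induction m generalizing f with
  | zero =>
    obtain ⟨c, rfl⟩ : ∃ c, f = vertexConst d A c :=
      ⟨_, eq_vertexConst_of_totalDiff_eq_zero hN hT hf hclosed⟩
    rw [totalDiff_vertexConst hNν hTτ, map_eq_zero_iff _ vertexConst_injective] at hclosed
    obtain ⟨c', hc'⟩ : ∃ c', (if Odd (n : ℤ) then ν c' else τ c') = c := by
      rcases Int.even_or_odd (n : ℤ) with h | h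
      · rw [if_pos h.add_one] at hclosed
        simpa only [if_neg (Int.not_odd_iff_even.2 h), Set.mem_range] using (hτν c).1 hclosed
      · rw [if_neg (Int.not_odd_iff_even.2 h.add_one)] at hclosed
        simpa only [if_pos h, Set.mem_range] using (hντ c).1 hclosed
    exact ⟨vertexConst d A c', suppLE_mono (Nat.cast_nonneg n) (vertexConst_mem_suppLE c'),
      by rw [totalDiff_vertexConst hNν hTτ, hc']⟩
  | succ m ih =>
    obtain ⟨g, hg, hfg⟩ := exists_sub_totalDiff_mem_suppLE (n := n) hN hT
      (by exact_mod_cast hf) hclosed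
    obtain ⟨g', hg', hfg'⟩ := ih (by omega) hfg <| by
      rw [map_sub, hclosed, totalDiff_totalDiff hN hT hNδ hTδ hNT hTN, sub_zero]
    refine ⟨g + g', add_mem (suppLE_mono (by omega) hg) hg', ?_⟩
    rw [map_add, hfg', add_sub_cancel]

end TotalComplex

section CubicalSymmetry

variable {d : ℕ} {A : Type*} [AddCommGroup A]

/-- The symmetry of the cubical tiling given by a signed permutation of the coordinates. -/
def signedPerm (perm : Equiv.Perm (Fin d)) (flip : Fin d → ℤˣ) : Cell d →+ Cell d where
  toFun y i := flip i • y (perm i)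
  map_zero' := funext fun _ => smul_zero _
  map_add' _ _ := funext fun _ => smul_add _ _ _

/-- The operator induced on cochains by a symmetry `ρ` of the set of cells, a cochain `o` that
compares the orientations of `y` and `ρ y`, and an operator `σ` on the coefficients. -/
def twist (ρ : Cell d → Cell d) (o : Cell d → ℤˣ) (σ : Module.End ℤ A) :
    Module.End ℤ (Cell d → A) where
  toFun f y := o y • σ (f (ρ y))
  map_add' f g := funext fun y => by simp only [Pi.add_apply, map_add, smul_add]
  map_smul' c f := funext fun y => by
    simp only [Pi.smul_apply, map_smul, RingHom.id_apply, smul_comm c]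

/-- The differential of the total complex that is built from the cubical cochains and the periodic
resolution of the cyclic group of order `q` whose generator acts by `S`. -/
def cyclicDiff (q : ℕ) (S : Module.End ℤ (Cell d → A)) (n : ℤ) : Module.End ℤ (Cell d → A) :=
  totalDiff (∑ i ∈ Finset.range q, S ^ i) (S - 1) n

lemma signedPerm_apply (perm : Equiv.Perm (Fin d)) (flip : Fin d → ℤˣ) (y : Cell d) (i : Fin d) :
    signedPerm perm flip y i = flip i • y (perm i) := rfl

lemma twist_apply (ρ : Cell d → Cell d) (o : Cell d → ℤˣ) (σ : Module.End ℤ A) (f : Cell d → A)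
    (y : Cell d) : twist ρ o σ f y = o y • σ (f (ρ y)) := rfl

lemma odd_units_smul (u : ℤˣ) (a : ℤ) : Odd (u • a) ↔ Odd a := by
  rcases Int.units_eq_one_or u with rfl | rfl <;> simp [Units.neg_smul]

lemma dim_signedPerm (perm : Equiv.Perm (Fin d)) (flip : Fin d → ℤˣ) (y : Cell d) :
    dim (signedPerm perm flip y) = dim y := by
  simp only [dim, signedPerm_apply, odd_units_smul]
  exact Finset.card_equiv perm (by simp)

lemma twist_pow_apply (ρ : Cell d → Cell d) (o : Cell d → ℤˣ) (σ : Module.End ℤ A) (i : ℕ)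
    (f : Cell d → A) (y : Cell d) :
    (twist ρ o σ ^ i) f y = (∏ j ∈ Finset.range i, o (ρ^[j] y)) • (σ ^ i) (f (ρ^[i] y)) := by
  induction i generalizing y with
  | zero => simp
  | succ i ih =>
    rw [pow_succ', Module.End.mul_apply, twist_apply, ih, Finset.prod_range_succ', mul_comm,
      mul_smul, Units.smul_def (∏ _ ∈ _, _), map_zsmul, ← Units.smul_def, pow_succ']
    rfl

namespace IsDimLocal

variable {X Y : Module.End ℤ (Cell d → A)}

lemma one : IsDimLocal (1 : Module.End ℤ (Cell d → A)) := fun _ _ hf => hf _ rfl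

lemma sub (hX : IsDimLocal X) (hY : IsDimLocal Y) : IsDimLocal (X - Y) := fun f y hf => by
  rw [LinearMap.sub_apply, Pi.sub_apply, hX hf, hY hf, sub_zero]

lemma mul (hX : IsDimLocal X) (hY : IsDimLocal Y) : IsDimLocal (X * Y) := fun _ _ hf =>
  hX fun _ hz => hY fun w hw => hf w (hw.trans hz)

lemma pow (hX : IsDimLocal X) (i : ℕ) : IsDimLocal (X ^ i) := by
  induction i with
  | zero => exact one
  | succ i ih => exact ih.mul hX

lemma sum_pow (hX : IsDimLocal X) (q : ℕ) : IsDimLocal (∑ i ∈ Finset.range q, X ^ i) :=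
  fun f y hf => by
    rw [LinearMap.sum_apply, Finset.sum_apply]
    exact Finset.sum_eq_zero fun i _ => hX.pow i hf

end IsDimLocal

/-- Orientation data for the symmetry `signedPerm perm flip` of order `q`: `orient y` compares the
orientation of the cell `y` with that of its image. -/
structure CubicalSymmetry (d q : ℕ) where
  /-- the underlying permutation of the coordinates -/
  perm : Equiv.Perm (Fin d)
  /-- the signs of the coordinates -/
  flip : Fin d → ℤˣ
  /-- the orientation character -/
  orient : Cell d → ℤˣ
  orient_vertex : ∀ y, dim y = 0 → orient y = 1
  orient_add_two_nsmul : ∀ y z, orient (y + 2 • z) = orient y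
  orient_face : ∀ y j, Odd (y (perm j)) →
    orient (y + Pi.single (perm j) 1) * incidence (perm j) y * flip j =
      orient y * incidence j (signedPerm perm flip y)
  iterate_eq : ∀ y, (signedPerm perm flip)^[q] y = y
  prod_orient : ∀ y, ∏ j ∈ Finset.range q, orient ((signedPerm perm flip)^[j] y) = 1

namespace CubicalSymmetry

variable {q : ℕ} (E : CubicalSymmetry d q) {σ : Module.End ℤ A}

/-- The underlying map on cells. -/
abbrev map : Cell d →+ Cell d := signedPerm E.perm E.flip

/-- The induced operator on cochains. -/
abbrev op (σ : Module.End ℤ A) : Module.End ℤ (Cell d → A) := twist E.map E.orient σ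

lemma isDimLocal_op : IsDimLocal (E.op σ) := fun f y hf => by
  rw [twist_apply, hf _ (dim_signedPerm _ _ y), map_zero, smul_zero]

lemma op_pow_eq_one (hσ : σ ^ q = 1) : E.op σ ^ q = 1 := by
  ext f y
  rw [twist_pow_apply, E.prod_orient, hσ, E.iterate_eq, one_smul]
  rfl

lemma op_vertexConst (c : A) : E.op σ (vertexConst d A c) = vertexConst d A (σ c) := by
  ext y
  rw [twist_apply, vertexConst_apply, vertexConst_apply, dim_signedPerm]
  split_ifs with hy
  · rw [E.orient_vertex y hy, one_smul]
  · rw [map_zero, smul_zero]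

lemma map_add_single (y : Cell d) (j : Fin d) (c : ℤ) :
    E.map (y + Pi.single (E.perm j) c) = E.map y + Pi.single j (E.flip j • c) := by
  ext i
  by_cases hij : i = j
  · subst hij
    simp [signedPerm_apply, smul_add]
  · simp [signedPerm_apply, hij]

lemma sub_faces_map (f : Cell d → A) (y : Cell d) (j : Fin d) :
    f (E.map (y + Pi.single (E.perm j) 1)) - f (E.map (y - Pi.single (E.perm j) 1)) =
      E.flip j • (f (E.map y + Pi.single j 1) - f (E.map y - Pi.single j 1)) := by
  simp only [sub_eq_add_neg, ← Pi.single_neg, map_add_single]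
  rcases Int.units_eq_one_or (E.flip j) with h | h <;> simp [h, Units.neg_smul, add_comm]

lemma commute_op_coboundary : Commute (E.op σ) (coboundary d A) := by
  refine LinearMap.ext fun f => funext fun y => ?_
  rw [Module.End.mul_apply, Module.End.mul_apply, twist_apply, coboundary_apply, coboundary_apply,
    map_sum, Finset.smul_sum]
  refine (Finset.sum_congr rfl fun j _ => ?_).trans (Equiv.sum_comp E.perm _)
  simp only [signedPerm_apply, odd_units_smul]
  split_ifs with hj
  · have orient_sub : E.orient (y - Pi.single (E.perm j) 1) =
        E.orient (y + Pi.single (E.perm j) 1) := by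
      rw [← E.orient_add_two_nsmul _ (Pi.single (E.perm j) 1)]
      congr 1
      abel
    rw [twist_apply, twist_apply, orient_sub, ← smul_sub, ← map_sub, E.sub_faces_map f y j,
      Units.smul_def (E.flip j), map_zsmul, ← Units.smul_def, Units.smul_def (incidence j _),
      map_zsmul, ← Units.smul_def, smul_smul, smul_smul, smul_smul, ← E.orient_face y j hj]
    congr 1
    ac_rfl
  · rw [map_zero, smul_zero]

lemma cyclicDiff_mem_suppLE {n : ℤ} {f : Cell d → A} (hf : f ∈ suppLE d A n) :
    cyclicDiff q (E.op σ) n f ∈ suppLE d A (n + 1) :=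
  totalDiff_mem_suppLE (E.isDimLocal_op.sum_pow q) (E.isDimLocal_op.sub .one) hf

lemma sum_pow_op_vertexConst (c : A) :
    (∑ i ∈ Finset.range q, E.op σ ^ i) (vertexConst d A c) =
      vertexConst d A ((∑ i ∈ Finset.range q, σ ^ i) c) := by
  have pow_op_vertexConst (i : ℕ) :
      (E.op σ ^ i) (vertexConst d A c) = vertexConst d A ((σ ^ i) c) := by
    induction i with
    | zero => rfl
    | succ i ih => rw [pow_succ', Module.End.mul_apply, ih, op_vertexConst, pow_succ']; rfl
  simp only [LinearMap.sum_apply, pow_op_vertexConst, map_sum]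

lemma op_sub_one_vertexConst (c : A) :
    (E.op σ - 1) (vertexConst d A c) = vertexConst d A ((σ - 1) c) := by
  simp only [LinearMap.sub_apply, op_vertexConst, Module.End.one_apply, map_sub]

lemma commute_sum_pow_op_coboundary :
    Commute (∑ i ∈ Finset.range q, E.op σ ^ i) (coboundary d A) :=
  Commute.sum_left _ _ _ fun i _ => E.commute_op_coboundary.pow_left i

lemma commute_op_sub_one_coboundary : Commute (E.op σ - 1) (coboundary d A) :=
  E.commute_op_coboundary.sub_left (Commute.one_left _)

lemma sum_pow_op_mul (hσ : σ ^ q = 1) :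
    (∑ i ∈ Finset.range q, E.op σ ^ i) * (E.op σ - 1) = 0 := by
  rw [geom_sum_mul, E.op_pow_eq_one hσ, sub_self]

lemma op_sub_one_mul (hσ : σ ^ q = 1) :
    (E.op σ - 1) * (∑ i ∈ Finset.range q, E.op σ ^ i) = 0 := by
  rw [mul_geom_sum, E.op_pow_eq_one hσ, sub_self]

lemma cyclicDiff_cyclicDiff (hσ : σ ^ q = 1) (n : ℤ) (f : Cell d → A) :
    cyclicDiff q (E.op σ) (n + 1) (cyclicDiff q (E.op σ) n f) = 0 :=
  totalDiff_totalDiff (E.isDimLocal_op.sum_pow q) (E.isDimLocal_op.sub .one)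
    E.commute_sum_pow_op_coboundary E.commute_op_sub_one_coboundary (E.sum_pow_op_mul hσ)
    (E.op_sub_one_mul hσ) f

theorem exists_cyclicDiff_eq (hσ : σ ^ q = 1)
    (hexact : Function.Exact ⇑(∑ i ∈ Finset.range q, σ ^ i) ⇑(σ - 1))
    (hexact' : Function.Exact ⇑(σ - 1) ⇑(∑ i ∈ Finset.range q, σ ^ i)) {n : ℕ}
    {f : Cell d → A} (hf : f ∈ suppLE d A (n + 1)) (hclosed : cyclicDiff q (E.op σ) (n + 1) f = 0) :
    ∃ g ∈ suppLE d A n, cyclicDiff q (E.op σ) n g = f :=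
  exists_totalDiff_eq (E.isDimLocal_op.sum_pow q) (E.isDimLocal_op.sub .one)
    E.commute_sum_pow_op_coboundary E.commute_op_sub_one_coboundary (E.sum_pow_op_mul hσ)
    (E.op_sub_one_mul hσ) E.sum_pow_op_vertexConst E.op_sub_one_vertexConst hexact hexact' le_rfl
    (by exact_mod_cast hf) hclosed

end CubicalSymmetry

end CubicalSymmetry

section CyclicShift

variable (q : ℕ) (A : Type*) [AddCommGroup A]

/-- The action of the generator of `ℤ/q` on the regular module `ZMod q → A`. -/
def shift : Module.End ℤ (ZMod q → A) := LinearMap.funLeft ℤ A (· + 1)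

variable {q A}

lemma shift_apply (φ : ZMod q → A) (k : ZMod q) : shift q A φ k = φ (k + 1) := rfl

lemma shift_pow_apply (i : ℕ) (φ : ZMod q → A) (k : ZMod q) : (shift q A ^ i) φ k = φ (k + i) := by
  induction i generalizing k with
  | zero => simp
  | succ i ih =>
    rw [pow_succ', Module.End.mul_apply, shift_apply, ih]
    push_cast
    congr 1
    ring

lemma shift_pow_self : shift q A ^ q = 1 := by
  ext φ k
  simp [shift_pow_apply]

variable [NeZero q]

lemma sum_range_natCast_zmod (φ : ZMod q → A) :
    ∑ i ∈ Finset.range q, φ i = ∑ k, φ k := by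
  refine Finset.sum_nbij' (fun i => (i : ZMod q)) ZMod.val (by simp) (by simp [ZMod.val_lt])
    (fun i hi => ZMod.val_cast_of_lt (Finset.mem_range.1 hi)) (by simp) (by simp)

lemma sum_shift_pow_apply (φ : ZMod q → A) (k : ZMod q) :
    (∑ i ∈ Finset.range q, shift q A ^ i) φ k = ∑ j, φ j := by
  simp only [LinearMap.sum_apply, Finset.sum_apply, shift_pow_apply]
  exact (sum_range_natCast_zmod fun j => φ (k + j)).trans (Equiv.sum_comp (Equiv.addLeft k) φ)

lemma eq_apply_zero_of_shift_eq {φ : ZMod q → A} (h : shift q A φ = φ) (k : ZMod q) :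
    φ k = φ 0 := by
  have pow_fixed (i : ℕ) : (shift q A ^ i) φ = φ := by
    rw [Module.End.pow_apply]
    exact Function.iterate_fixed h i
  simpa [shift_pow_apply] using congrFun (pow_fixed k.val) 0

lemma exact_sum_shift_pow :
    Function.Exact ⇑(∑ i ∈ Finset.range q, shift q A ^ i) ⇑(shift q A - 1) := by
  intro φ
  constructor
  · intro h
    have fixed : shift q A φ = φ := sub_eq_zero.1 h
    refine ⟨Pi.single 0 (φ 0), funext fun k => ?_⟩
    rw [sum_shift_pow_apply, eq_apply_zero_of_shift_eq fixed k]
    simp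
  · rintro ⟨ψ, rfl⟩
    ext k
    simp only [LinearMap.sub_apply, Module.End.one_apply, Pi.sub_apply, shift_apply,
      sum_shift_pow_apply, sub_self, Pi.zero_apply]

lemma shift_sub_one_partialSum {φ : ZMod q → A} (hφ : ∑ k, φ k = 0) :
    (shift q A - 1) (fun k => ∑ i ∈ Finset.range k.val, φ i) = φ := by
  ext k
  have sum_succ : ∑ i ∈ Finset.range (k.val + 1), φ i = ∑ i ∈ Finset.range k.val, φ i + φ k := by
    rw [Finset.sum_range_succ, ZMod.natCast_zmod_val]
  rw [LinearMap.sub_apply, Pi.sub_apply, shift_apply, Module.End.one_apply, sub_eq_iff_eq_add',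
    ← sum_succ]
  rcases (Nat.add_one_le_iff.2 (ZMod.val_lt k)).lt_or_eq with hk | hk
  · rw [← ZMod.val_natCast_of_lt hk, Nat.cast_add_one, ZMod.natCast_zmod_val]
  · have k_add_one : k + 1 = 0 := by
      rw [← ZMod.natCast_zmod_val k, ← Nat.cast_add_one, hk, ZMod.natCast_self]
    rw [k_add_one, ZMod.val_zero, Finset.sum_range_zero, hk,
      sum_range_natCast_zmod, hφ]

lemma exact_shift_sub_one :
    Function.Exact ⇑(shift q A - 1) ⇑(∑ i ∈ Finset.range q, shift q A ^ i) := by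
  intro φ
  constructor
  · intro h
    exact ⟨_, shift_sub_one_partialSum ((sum_shift_pow_apply φ 0).symm.trans (congrFun h 0))⟩
  · rintro ⟨ψ, rfl⟩
    rw [← Module.End.mul_apply, geom_sum_mul, shift_pow_self, sub_self, LinearMap.zero_apply]

end CyclicShift

section Intertwining

variable {d d' q c : ℕ} {A A' : Type*} [AddCommGroup A] [AddCommGroup A']
  {U : Submodule ℤ (Cell d → A)} {S : Module.End ℤ (Cell d → A)} {S' : Module.End ℤ (Cell d' → A')}
  {Θ : (Cell d → A) →ₗ[ℤ] (Cell d' → A')}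

lemma map_sum_pow_of_intertwining (hU : ∀ f ∈ U, S f ∈ U) (hS : ∀ f ∈ U, Θ (S f) = S' (Θ f))
    {f : Cell d → A} (hf : f ∈ U) :
    Θ ((∑ i ∈ Finset.range q, S ^ i) f) = (∑ i ∈ Finset.range q, S' ^ i) (Θ f) := by
  have pow_intertwining (i : ℕ) : (S ^ i) f ∈ U ∧ Θ ((S ^ i) f) = (S' ^ i) (Θ f) := by
    induction i with
    | zero => exact ⟨hf, rfl⟩
    | succ i ih =>
      rw [pow_succ', pow_succ', Module.End.mul_apply, Module.End.mul_apply, ← ih.2]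
      exact ⟨hU _ ih.1, hS _ ih.1⟩
  simp only [LinearMap.sum_apply, map_sum, (pow_intertwining _).2]

theorem map_cyclicDiff_of_intertwining
    (hΘ : ∀ f y, (∀ z, dim z = dim y + c → f z = 0) → Θ f y = 0)
    (hU : ∀ f ∈ U, S f ∈ U) (hS : ∀ f ∈ U, Θ (S f) = S' (Θ f))
    (hδ : ∀ f ∈ U, Θ (coboundary d A f) = coboundary d' A' (Θ f))
    {n n' : ℤ} (hn : Even (n + n' + c)) {f : Cell d → A} (hf : f ∈ U) :
    Θ (cyclicDiff q S n f) = cyclicDiff q S' n' (Θ f) := by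
  have Θ_congr {f g : Cell d → A} {y : Cell d'} (h : ∀ z, dim z = dim y + c → f z = g z) :
      Θ f y = Θ g y := by
    rw [← sub_eq_zero, ← Pi.sub_apply, ← map_sub]
    exact hΘ _ _ fun z hz => sub_eq_zero.2 (h z hz)
  ext y
  rcases Int.even_or_odd (n' + 1 + dim y) with h | h
  · rw [cyclicDiff, cyclicDiff, totalDiff_apply_of_even h,
      ← map_sum_pow_of_intertwining hU hS hf, ← hδ f hf, ← Pi.add_apply, ← map_add]
    exact Θ_congr fun z hz => totalDiff_apply_of_even (by rw [hz]; push_cast; grind) f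
  · rw [cyclicDiff, cyclicDiff, totalDiff_apply_of_odd h, LinearMap.sub_apply,
      Module.End.one_apply, ← hS f hf, ← hδ f hf, ← map_sub, ← Pi.sub_apply, ← map_sub]
    exact Θ_congr fun z hz => totalDiff_apply_of_odd (by rw [hz]; push_cast; grind) f

end Intertwining

section TotalCohomology

variable {d q : ℕ} {A : Type*} [AddCommGroup A]

/-- The cohomology in degree `n` of the total complex of the cochains in `P`. -/
abbrev TotalCohomology (q : ℕ) (S : Module.End ℤ (Cell d → A)) (P : Submodule ℤ (Cell d → A))
    (n : ℤ) : Type _ :=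
  Subquotient (P ⊓ suppLE d A n ⊓ LinearMap.ker (cyclicDiff q S n))
    ((P ⊓ suppLE d A (n - 1)).map (cyclicDiff q S (n - 1)))

variable {S : Module.End ℤ (Cell d → A)} {P : Submodule ℤ (Cell d → A)}

lemma suppLE_eq_bot {n : ℤ} (hn : n < 0) : suppLE d A n = ⊥ :=
  eq_bot_iff.2 fun _ hf => funext fun y => hf y (by omega)

lemma suppLE_eq_top {n : ℤ} (hn : d ≤ n) : suppLE d A n = ⊤ :=
  eq_top_iff.2 fun _ _ y hy => by
    have dim_le : dim y ≤ d := (Finset.card_le_univ _).trans_eq (Fintype.card_fin d)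
    omega

lemma cyclicDiff_add_two (n : ℤ) : cyclicDiff q S (n + 2) = cyclicDiff q S n := by
  have even_iff (y : Cell d) : Even (n + 2 + 1 + dim y) ↔ Even (n + 1 + dim y) := by grind
  refine LinearMap.ext fun f => funext fun y => ?_
  exact if_congr (even_iff y) rfl rfl

theorem subsingleton_totalCohomology {n : ℤ} (hn : n < 0) :
    Subsingleton (TotalCohomology q S P n) := by
  rw [TotalCohomology, suppLE_eq_bot hn, inf_bot_eq, bot_inf_eq]
  infer_instance

theorem nonempty_totalCohomology_add_two_equiv {n : ℤ} (hn : d < n) :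
    Nonempty (TotalCohomology q S P (n + 2) ≃ₗ[ℤ] TotalCohomology q S P n) := by
  unfold TotalCohomology
  rw [add_sub_right_comm, cyclicDiff_add_two, cyclicDiff_add_two,
    suppLE_eq_top (by omega), suppLE_eq_top (by omega), suppLE_eq_top (by omega),
    suppLE_eq_top (by omega)]
  exact ⟨.refl _ _⟩

end TotalCohomology

section LatticeModel

open CategoryTheory Crystal

lemma zmodHom_ofAdd_one {G : Type*} [Group G] (m : ℕ) [NeZero m] (α : G) (hα : α ^ m = 1) :
    zmodHom m α hα (.ofAdd 1) = α := by
  change α ^ (1 : ZMod m).val = α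
  rw [ZMod.val_one_eq_one_mod, ← pow_eq_pow_mod 1 hα, pow_one]

lemma matAction_ofAdd_one {r : ℕ} (q : ℕ) [NeZero q] (M : Matrix (Fin r) (Fin r) ℤ) (hq : M ^ q = 1)
    (v : Lat r) : (matAction q M hq (.ofAdd 1) v).toAdd = M *ᵥ v.toAdd := by
  rw [matAction, zmodHom_ofAdd_one]
  rfl

/-- An action of `ℤ^r ⋊ ℤ/q` on the cubical tiling of `ℝ^d`: the lattice is embedded by `embed` as a
group of translations (a translation by `z` moves the cell `y` to `y + 2 • z`), and the generator of
`ℤ/q` acts through a cubical symmetry. The equivariant map `coord` shows that the translations act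
freely on the set of cells. -/
structure LatticeModel {r : ℕ} (q : ℕ) (M : Matrix (Fin r) (Fin r) ℤ) (d : ℕ)
    extends CubicalSymmetry d q where
  /-- the translation lattice -/
  embed : (Fin r → ℤ) →+ Cell d
  /-- an equivariant map from the cells to the lattice -/
  coord : Cell d → Fin r → ℤ
  map_embed_mulVec : ∀ v, signedPerm perm flip (embed (M *ᵥ v)) = embed v
  coord_sub : ∀ y v, coord (y - 2 • embed v) = coord y - v

namespace LatticeModel

variable {r q d : ℕ} {M : Matrix (Fin r) (Fin r) ℤ} (E : LatticeModel q M d)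

/-- The cochains that are invariant under the translation lattice. -/
def periodic : Submodule ℤ (Cell d → ℤ) where
  carrier := {F | ∀ y v, F (y - 2 • E.embed v) = F y}
  add_mem' hF hG y v := congrArg₂ (· + ·) (hF y v) (hG y v)
  zero_mem' _ _ := rfl
  smul_mem' c _ hF y v := congrArg (c • ·) (hF y v)

/-- The total differential on integral cochains on which the symmetry acts without twist. -/
abbrev diff (n : ℤ) : Module.End ℤ (Cell d → ℤ) := cyclicDiff q (E.op 1) n

variable (q d) in
/-- The extension of a cochain to all copies of the tiling. -/
def constExtension : (Cell d → ℤ) →ₗ[ℤ] (Cell d → ZMod q → ℤ) where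
  toFun F y _ := F y
  map_add' _ _ := rfl
  map_smul' _ _ := rfl

lemma constExtension_cyclicDiff (n : ℤ) (F : Cell d → ℤ) :
    constExtension q d (E.diff n F) =
      cyclicDiff q (E.op (shift q ℤ)) n (constExtension q d F) := by
  refine map_cyclicDiff_of_intertwining (U := ⊤) (c := 0) (Θ := constExtension q d)
    (fun f y h => funext fun _ => h y rfl) (fun _ _ => trivial) (fun _ _ => rfl)
    (fun f _ => ?_) (by simp) trivial
  ext y k
  simp only [constExtension, LinearMap.coe_mk, AddHom.coe_mk, coboundary_apply, Finset.sum_apply]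
  exact Finset.sum_congr rfl fun i _ => by split_ifs <;> rfl

variable [NeZero q] (hq : M ^ q = 1)

/-- The translation by which `v` acts on the copy with index `k` of the cubical tiling. -/
def translation (k : ZMod q) (v : Lat r) : Cell d :=
  E.embed (matAction q M hq (.ofAdd (-k)) v).toAdd

lemma translation_zero (v : Lat r) : E.translation hq 0 v = E.embed v.toAdd := by
  rw [translation, neg_zero, ofAdd_zero, map_one]
  rfl

lemma translation_one (k : ZMod q) : E.translation hq k 1 = 0 := by
  rw [translation, map_one, toAdd_one, map_zero]

lemma translation_mul (k : ZMod q) (v w : Lat r) :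
    E.translation hq k (v * w) = E.translation hq k v + E.translation hq k w := by
  rw [translation, map_mul, toAdd_mul, map_add]
  rfl

lemma translation_matAction (k : ZMod q) (l : Multiplicative (ZMod q)) (v : Lat r) :
    E.translation hq k (matAction q M hq l v) = E.translation hq (k - l.toAdd) v := by
  rw [translation, translation, ← MulAut.mul_apply, ← map_mul, neg_sub, sub_eq_neg_add, ofAdd_add,
    ofAdd_toAdd]

lemma map_translation (k : ZMod q) (v : Lat r) :
    E.map (E.translation hq k v) = E.translation hq (k + 1) v := by
  have neg_eq : -k = 1 + -(k + 1) := by ring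
  rw [translation, neg_eq, ofAdd_add, map_mul, MulAut.mul_apply, matAction_ofAdd_one,
    E.map_embed_mulVec]
  rfl

/-- The right action of `ℤ^r ⋊ ℤ/q` on the cells of `q` copies of the cubical tiling. -/
def move (g : Crys q M hq) (x : Cell d × ZMod q) : Cell d × ZMod q :=
  (x.1 - 2 • E.translation hq x.2 g.left, x.2 - g.right.toAdd)

lemma move_one (x : Cell d × ZMod q) : E.move hq 1 x = x := by
  simp [move, translation_one]

lemma move_mul (g h : Crys q M hq) (x : Cell d × ZMod q) :
    E.move hq (g * h) x = E.move hq h (E.move hq g x) := by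
  simp only [move, SemidirectProduct.mul_left, SemidirectProduct.mul_right, translation_mul,
    translation_matAction, toAdd_mul, smul_add, sub_add_eq_sub_sub]

/-- The position of a cell relative to the fundamental domain, as an element of `ℤ^r ⋊ ℤ/q`. -/
def position (x : Cell d × ZMod q) : Crys q M hq :=
  ⟨matAction q M hq (.ofAdd x.2) (.ofAdd (E.coord x.1)), .ofAdd x.2⟩

lemma position_move (g : Crys q M hq) (x : Cell d × ZMod q) :
    E.position hq (E.move hq g x) = g⁻¹ * E.position hq x := by
  rw [eq_inv_mul_iff_mul_eq]
  have right_eq : g.right * .ofAdd (x.2 - g.right.toAdd) = .ofAdd x.2 := by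
    rw [ofAdd_sub, ofAdd_toAdd, mul_div_cancel]
  refine SemidirectProduct.ext ?_ right_eq
  simp only [SemidirectProduct.mul_left, position, move]
  rw [← MulAut.mul_apply, ← map_mul, right_eq, translation, E.coord_sub, ofAdd_sub, ofAdd_toAdd,
    map_div, ← MulAut.mul_apply, ← map_mul, ofAdd_neg, mul_inv_cancel, map_one, MulAut.one_apply,
    mul_div_cancel]

/-- The representation of `ℤ^r ⋊ ℤ/q` on the cochains of `q` copies of the cubical tiling. -/
def cochainRep : Representation ℤ (Crys q M hq) (Cell d → ZMod q → ℤ) where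
  toFun g :=
    { toFun f y k := Function.uncurry f (E.move hq g (y, k))
      map_add' _ _ := rfl
      map_smul' _ _ := rfl }
  map_one' := by
    ext f y k
    simp [move_one]
  map_mul' g h := by
    ext f y k
    exact congrArg (Function.uncurry f) (E.move_mul hq g h (y, k))

lemma cochainRep_apply (g : Crys q M hq) (f : Cell d → ZMod q → ℤ) (y : Cell d) (k : ZMod q) :
    E.cochainRep hq g f y k =
      f (y - 2 • E.translation hq k g.left) (k - g.right.toAdd) := rfl

lemma cochainRep_op_shift (g : Crys q M hq) (f : Cell d → ZMod q → ℤ) :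
    E.cochainRep hq g (E.op (shift q ℤ) f) = E.op (shift q ℤ) (E.cochainRep hq g f) := by
  ext y k
  have orient_sub (z : Cell d) : E.orient (y - 2 • z) = E.orient y := by
    rw [sub_eq_add_neg, ← smul_neg, E.orient_add_two_nsmul]
  simp only [cochainRep_apply, twist_apply, Pi.smul_apply, shift_apply, orient_sub, map_sub,
    map_nsmul, map_translation]
  congr 2
  ring

lemma cochainRep_coboundary (g : Crys q M hq) (f : Cell d → ZMod q → ℤ) :
    E.cochainRep hq g (coboundary d (ZMod q → ℤ) f) =
      coboundary d (ZMod q → ℤ) (E.cochainRep hq g f) := by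
  ext y k
  set w := -E.translation hq k g.left with hw
  have cell_eq (z : Cell d) : z - 2 • E.translation hq k g.left = z + 2 • w := by
    rw [hw, smul_neg, sub_eq_add_neg]
  simp only [cochainRep_apply, coboundary_apply, Finset.sum_apply, cell_eq]
  refine Finset.sum_congr rfl fun i _ => ?_
  simp only [odd_add_two_nsmul_apply, incidence_add_two_nsmul]
  split_ifs
  · simp only [Pi.smul_apply, Pi.sub_apply, cochainRep_apply, cell_eq, add_right_comm _ (2 • w),
      sub_add_eq_add_sub]
  · rfl

lemma cochainRep_apply_eq_zero (g : Crys q M hq) {f : Cell d → ZMod q → ℤ} {y : Cell d}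
    (hf : ∀ z, dim z = dim y → f z = 0) : E.cochainRep hq g f y = 0 := by
  ext k
  rw [cochainRep_apply, hf _ (dim_sub_two_nsmul _ _)]
  rfl

lemma cochainRep_cyclicDiff (g : Crys q M hq) (n : ℤ) (f : Cell d → ZMod q → ℤ) :
    E.cochainRep hq g (cyclicDiff q (E.op (shift q ℤ)) n f) =
      cyclicDiff q (E.op (shift q ℤ)) n (E.cochainRep hq g f) :=
  map_cyclicDiff_of_intertwining (U := ⊤) (c := 0)
    (fun _ _ h => E.cochainRep_apply_eq_zero hq g h) (fun _ _ => trivial)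
    (fun f _ => E.cochainRep_op_shift hq g f) (fun f _ => E.cochainRep_coboundary hq g f)
    (by simp) trivial

lemma suppLE_le_comap_cochainRep (n : ℤ) (g : Crys q M hq) :
    suppLE d (ZMod q → ℤ) n ≤ (suppLE d _ n).comap (E.cochainRep hq g) :=
  fun _ hf _ hy => E.cochainRep_apply_eq_zero hq g fun z hz => hf z (hz ▸ hy)

/-- The terms of a resolution of the trivial representation `ℤ` by acyclic representations. -/
abbrev resolution (n : ℕ) : Rep.{0} ℤ (Crys q M hq) :=
  Rep.of ((E.cochainRep hq).subrepresentation (suppLE d _ n) (E.suppLE_le_comap_cochainRep hq n))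

/-- The differentials of the resolution. -/
def resolutionDiff (n : ℕ) : E.resolution hq n ⟶ E.resolution hq (n + 1) := Rep.ofHom
  { toFun f := ⟨cyclicDiff q (E.op (shift q ℤ)) n f.1, by
      exact_mod_cast E.cyclicDiff_mem_suppLE f.2⟩
    map_add' f f' := Subtype.ext (map_add _ f.1 f'.1)
    map_smul' c f := Subtype.ext (map_smul _ c f.1)
    isIntertwining' g := LinearMap.ext fun f => Subtype.ext
      (E.cochainRep_cyclicDiff hq g n f.1).symm }

/-- The augmentation of the resolution. -/
def augmentation : Rep.trivial ℤ (Crys q M hq) ℤ ⟶ E.resolution hq 0 := Rep.ofHom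
  { toFun c := ⟨vertexConst d (ZMod q → ℤ) (Function.const _ c), vertexConst_mem_suppLE _⟩
    map_add' _ _ := Subtype.ext (map_add (vertexConst d (ZMod q → ℤ)) _ _)
    map_smul' c a := Subtype.ext (map_smul (vertexConst d (ZMod q → ℤ)) c (Function.const _ a))
    isIntertwining' g := LinearMap.ext fun c => Subtype.ext <| funext fun y => funext fun k => by
      change vertexConst d (ZMod q → ℤ) _ y k = E.cochainRep hq g (vertexConst d (ZMod q → ℤ) _) y k
      rw [cochainRep_apply, vertexConst_apply, vertexConst_apply, dim_sub_two_nsmul]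
      split_ifs <;> rfl }

lemma augmentation_injective : Function.Injective (E.augmentation hq).hom := fun _ _ h =>
  congrFun (vertexConst_injective (congrArg Subtype.val h)) 0

lemma exact_augmentation :
    Function.Exact (E.augmentation hq).hom (E.resolutionDiff hq 0).hom := by
  have diff_vertexConst (φ : ZMod q → ℤ) :
      cyclicDiff q (E.op (shift q ℤ)) 0 (vertexConst d (ZMod q → ℤ) φ) =
        vertexConst d (ZMod q → ℤ) ((shift q ℤ - 1) φ) := by
    rw [cyclicDiff, totalDiff_vertexConst E.sum_pow_op_vertexConst E.op_sub_one_vertexConst,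
      if_neg (by decide)]
  intro f
  constructor
  · intro hf
    have closed : cyclicDiff q (E.op (shift q ℤ)) 0 f.1 = 0 := congrArg Subtype.val hf
    have f_eq : f.1 = vertexConst d (ZMod q → ℤ) (f.1 0) := eq_vertexConst_of_totalDiff_eq_zero
      (E.isDimLocal_op.sum_pow q) (E.isDimLocal_op.sub .one) f.2 closed
    rw [f_eq, diff_vertexConst] at closed
    have fixed : (shift q ℤ - 1) (f.1 0) = 0 :=
      vertexConst_injective (closed.trans (map_zero _).symm)
    refine ⟨f.1 0 0, Subtype.ext (Eq.trans ?_ f_eq.symm)⟩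
    exact congrArg (vertexConst d (ZMod q → ℤ))
      (funext fun k => (eq_apply_zero_of_shift_eq (sub_eq_zero.1 fixed) k).symm)
  · rintro ⟨c, rfl⟩
    refine Subtype.ext ((diff_vertexConst _).trans ?_)
    have fixed : (shift q ℤ - 1) (Function.const _ c) = 0 := sub_self _
    rw [fixed, map_zero]
    rfl

lemma exact_resolutionDiff (n : ℕ) :
    Function.Exact (E.resolutionDiff hq n).hom (E.resolutionDiff hq (n + 1)).hom := by
  intro f
  constructor
  · intro hf
    have mem_supp : f.1 ∈ suppLE d (ZMod q → ℤ) (n + 1) := f.2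
    have closed : cyclicDiff q (E.op (shift q ℤ)) (n + 1) f.1 = 0 := congrArg Subtype.val hf
    obtain ⟨g, hg, hgf⟩ := E.exists_cyclicDiff_eq (σ := shift q ℤ) shift_pow_self
      exact_sum_shift_pow exact_shift_sub_one mem_supp closed
    exact ⟨⟨g, hg⟩, Subtype.ext hgf⟩
  · rintro ⟨g, rfl⟩
    exact Subtype.ext (E.cyclicDiff_cyclicDiff shift_pow_self n g.1)

/-- The retraction reads off the value at a cell after moving the cell into the fundamental domain
of the free action. -/
lemma isZero_groupCohomology_resolution (n m : ℕ) :
    Limits.IsZero (groupCohomology (E.resolution hq n) (m + 1)) := by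
  let retraction : (Crys q M hq → E.resolution hq n) →ₗ[ℤ] E.resolution hq n :=
    { toFun F := ⟨fun y k => Function.uncurry (F (E.position hq (y, k))⁻¹).1
        (E.move hq (E.position hq (y, k)) (y, k)), fun y hy => funext fun k =>
          congrFun ((F _).2 _ (by rwa [move, dim_sub_two_nsmul])) _⟩
      map_add' _ _ := rfl
      map_smul' _ _ := rfl }
  refine isZero_groupCohomology_succ_of_retraction retraction (fun g F => ?_) (fun f => ?_) m
  · refine Subtype.ext (funext fun y => funext fun k => ?_)
    change Function.uncurry (F ((E.position hq (y, k))⁻¹ * g)).1 _ =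
      Function.uncurry (F (E.position hq (E.move hq g (y, k)))⁻¹).1
        (E.move hq _ (E.move hq g (y, k)))
    rw [position_move, ← move_mul, mul_inv_cancel_left, _root_.mul_inv_rev, inv_inv]
  · refine Subtype.ext (funext fun y => funext fun k => ?_)
    change Function.uncurry f.1 (E.move hq _ (E.move hq _ (y, k))) = Function.uncurry f.1 (y, k)
    rw [← move_mul, mul_inv_cancel, move_one]

/-- The restriction of a cochain to the copy of the tiling with index `0`. -/
def restrictZero (n : ℕ) : E.resolution hq n →ₗ[ℤ] (Cell d → ℤ) where
  toFun f y := f.1 y 0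
  map_add' _ _ := rfl
  map_smul' _ _ := rfl

lemma constExtension_mem_invariants {n : ℕ} {F : Cell d → ℤ} (hF : F ∈ E.periodic ⊓ suppLE d ℤ n) :
    (⟨constExtension q d F, fun y hy => funext fun _ => hF.2 y hy⟩ : E.resolution hq n) ∈
      (E.resolution hq n).ρ.invariants :=
  fun _ => Subtype.ext (funext fun _ => funext fun _ => hF.1 _ _)

variable {hq}

lemma apply_eq_apply_zero_of_mem_invariants {n : ℕ} {f : E.resolution hq n}
    (hf : f ∈ (E.resolution hq n).ρ.invariants) (y : Cell d) (k : ZMod q) : f.1 y k = f.1 y 0 := by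
  have h := congrFun (congrFun (congrArg Subtype.val (hf ⟨1, .ofAdd (-k)⟩)) y) 0
  refine Eq.trans ?_ h
  change _ = E.cochainRep hq _ f.1 y 0
  simp [cochainRep_apply, translation_one]

lemma constExtension_restrictZero {n : ℕ} {f : E.resolution hq n}
    (hf : f ∈ (E.resolution hq n).ρ.invariants) :
    constExtension q d (E.restrictZero hq n f) = f.1 :=
  funext fun y => funext fun k => (E.apply_eq_apply_zero_of_mem_invariants hf y k).symm

lemma restrictZero_resolutionDiff {n : ℕ} {f : E.resolution hq n}
    (hf : f ∈ (E.resolution hq n).ρ.invariants) :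
    E.restrictZero hq (n + 1) ((E.resolutionDiff hq n).hom f) =
      E.diff n (E.restrictZero hq n f) := by
  have h := E.constExtension_cyclicDiff n (E.restrictZero hq n f)
  rw [E.constExtension_restrictZero hf] at h
  exact funext fun y => (congrFun (congrFun h y) 0).symm

variable (hq)

lemma map_restrictZero_invariants (n : ℕ) :
    (E.resolution hq n).ρ.invariants.map (E.restrictZero hq n) = E.periodic ⊓ suppLE d ℤ n := by
  ext F
  constructor
  · rintro ⟨f, hf, rfl⟩
    refine ⟨fun y v => ?_, fun y hy => congrFun (f.2 y hy) 0⟩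
    have h := congrFun (congrFun (congrArg Subtype.val (hf ⟨.ofAdd v, 1⟩)) y) 0
    refine Eq.trans ?_ h
    change _ = E.cochainRep hq _ f.1 y 0
    simp [cochainRep_apply, translation_zero, restrictZero]
  · exact fun hF => ⟨_, E.constExtension_mem_invariants hq hF, rfl⟩

lemma map_restrictZero_cocycles (n : ℕ) :
    ((E.resolution hq n).ρ.invariants ⊓ LinearMap.ker (E.resolutionDiff hq n).hom.toLinearMap).map
      (E.restrictZero hq n) = E.periodic ⊓ suppLE d ℤ n ⊓ LinearMap.ker (E.diff n) := by
  rw [← E.map_restrictZero_invariants hq]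
  ext F
  constructor
  · rintro ⟨f, ⟨hf, hclosed⟩, rfl⟩
    refine ⟨⟨f, hf, rfl⟩, (E.restrictZero_resolutionDiff hf).symm.trans ?_⟩
    exact (congrArg _ hclosed).trans (map_zero _)
  · rintro ⟨⟨f, hf, rfl⟩, hclosed⟩
    refine ⟨f, ⟨hf, Subtype.ext ?_⟩, rfl⟩
    change cyclicDiff q (E.op (shift q ℤ)) n f.1 = 0
    rw [← E.constExtension_restrictZero hf, ← E.constExtension_cyclicDiff,
      LinearMap.mem_ker.1 hclosed, map_zero]

lemma map_restrictZero_coboundaries (n : ℕ) :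
    ((E.resolution hq n).ρ.invariants.map (E.resolutionDiff hq n).hom.toLinearMap).map
      (E.restrictZero hq (n + 1)) = (E.periodic ⊓ suppLE d ℤ n).map (E.diff n) := by
  rw [← E.map_restrictZero_invariants hq]
  ext F
  constructor
  · rintro ⟨_, ⟨f, hf, rfl⟩, rfl⟩
    exact ⟨_, ⟨f, hf, rfl⟩, (E.restrictZero_resolutionDiff hf).symm⟩
  · rintro ⟨_, ⟨f, hf, rfl⟩, rfl⟩
    exact ⟨_, ⟨f, hf, rfl⟩, E.restrictZero_resolutionDiff hf⟩

theorem nonempty_equiv_cohCrys (n : ℕ) :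
    Nonempty (TotalCohomology q (E.op 1) E.periodic (n + 1) ≃ₗ[ℤ] cohCrys q M hq (n + 1)) := by
  unfold TotalCohomology
  rw [add_sub_cancel_right]
  obtain ⟨e⟩ := nonempty_groupCohomology_equiv_of_acyclic_resolution n (E.augmentation hq)
    (E.resolutionDiff hq) (E.augmentation_injective hq) (E.exact_augmentation hq)
    (E.exact_resolutionDiff hq) (E.isZero_groupCohomology_resolution hq)
  have diff_mem_invariants {f : E.resolution hq n} (hf : f ∈ (E.resolution hq n).ρ.invariants) :
      (E.resolutionDiff hq n).hom f ∈ (E.resolution hq (n + 1)).ρ.invariants := fun g =>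
    (Rep.hom_comm_apply (E.resolutionDiff hq n) g f).symm.trans (congrArg _ (hf g))
  obtain ⟨e'⟩ := Subquotient.nonempty_equiv_of_map_eq (E.restrictZero hq (n + 1)) (by
      rintro z ⟨hz, -⟩ _ ⟨f, hf, rfl⟩ h
      exact Subtype.ext ((E.constExtension_restrictZero hz).symm.trans
        ((congrArg _ h).trans (E.constExtension_restrictZero (diff_mem_invariants hf)))))
    (E.map_restrictZero_cocycles hq (n + 1)) (E.map_restrictZero_coboundaries hq n)
  exact ⟨e'.symm.trans e⟩

end LatticeModel

end LatticeModel

section Cylinder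

variable {d q : ℕ} {A : Type*} [AddCommGroup A]

variable (d A) in
/-- The restriction of a cochain on `ℝ^(d+1)` to the cells of the form `z × a`. -/
def slice (a : ℤ) : (Cell (d + 1) → A) →ₗ[ℤ] (Cell d → A) :=
  LinearMap.funLeft ℤ A fun z => Fin.snoc z a

/-- The cochains on `ℝ^(d+1)` which are periodic in the last coordinate and whose slices lie in
`P`; they are the cochains in `P` on the product of `ℝ^d` and a circle. -/
def cylinder (P : Submodule ℤ (Cell d → A)) : Submodule ℤ (Cell (d + 1) → A) where
  carrier := {F | ∀ a, slice d A (a + 2) F = slice d A a F ∧ slice d A a F ∈ P}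
  add_mem' hF hG a := by
    rw [map_add, map_add, (hF a).1, (hG a).1]
    exact ⟨rfl, P.add_mem (hF a).2 (hG a).2⟩
  zero_mem' a := by
    rw [map_zero, map_zero]
    exact ⟨rfl, P.zero_mem⟩
  smul_mem' c F hF a := by
    rw [map_smul, map_smul, (hF a).1]
    exact ⟨rfl, P.smul_mem c (hF a).2⟩

/-- The cochains that are invariant under the translations of the cells by the vectors in `L`; a
translation by `z` moves the cell `y` to `y + 2 • z`. -/
def translationInvariants (A : Type*) [AddCommGroup A] (L : Set (Cell d)) :
    Submodule ℤ (Cell d → A) where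
  carrier := {f | ∀ y, ∀ z ∈ L, f (y + 2 • z) = f y}
  add_mem' hf hg y z hz := congrArg₂ (· + ·) (hf y z hz) (hg y z hz)
  zero_mem' _ _ _ := rfl
  smul_mem' c _ hf y z hz := congrArg (c • ·) (hf y z hz)

/-- The action on the product of `ℝ^d` and a circle which is given by `S` on the first factor and by
multiplication by `u` on the second factor. -/
def cylinderOp (u : ℤˣ) (S : Module.End ℤ (Cell d → A)) : Module.End ℤ (Cell (d + 1) → A) where
  toFun F y := u ^ y (Fin.last d) • S (slice d A (u • y (Fin.last d)) F) (Fin.init y)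
  map_add' F G := funext fun y => by simp only [map_add, Pi.add_apply, smul_add]
  map_smul' c F := funext fun y => by
    simp only [map_smul, Pi.smul_apply, RingHom.id_apply, smul_comm c]

/-- The cochain with slices `f` in the even and `g` in the odd positions. -/
def glue (f g : Cell d → A) (y : Cell (d + 1)) : A :=
  if Even (y (Fin.last d)) then f (Fin.init y) else g (Fin.init y)

variable {u : ℤˣ} {S : Module.End ℤ (Cell d → A)} {P : Submodule ℤ (Cell d → A)}
  {F : Cell (d + 1) → A} {n : ℤ}

lemma slice_apply (a : ℤ) (F : Cell (d + 1) → A) (z : Cell d) :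
    slice d A a F z = F (Fin.snoc z a) := rfl

lemma ext_slice {F G : Cell (d + 1) → A} (h : ∀ a, slice d A a F = slice d A a G) : F = G := by
  ext y
  rw [← Fin.snoc_init_self y]
  exact congrFun (h _) _

lemma slice_glue (f g : Cell d → A) (a : ℤ) : slice d A a (glue f g) = if Even a then f else g := by
  ext z
  rw [slice_apply, glue, Fin.snoc_last, Fin.init_snoc]
  split_ifs <;> rfl

lemma slice_cylinderOp (a : ℤ) (F : Cell (d + 1) → A) :
    slice d A a (cylinderOp u S F) = u ^ a • S (slice d A (u • a) F) := by
  ext z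
  simp [slice_apply, cylinderOp]

lemma slice_eq_of_mem_cylinder (hF : F ∈ cylinder P) {a b : ℤ} (h : Even (a - b)) :
    slice d A a F = slice d A b F := by
  have add_two_mul (k : ℤ) : slice d A (b + 2 * k) F = slice d A b F := by
    induction k with
    | zero => simp
    | succ k ih => rw [mul_add_one, ← add_assoc, (hF _).1, ih]
    | pred k ih => rw [← ih, ← (hF _).1]; congr 2; ring
  obtain ⟨k, hk⟩ := h
  rw [← add_two_mul k, show a = b + 2 * k by omega]

lemma snoc_add_two_nsmul (y z : Cell d) (a b : ℤ) :
    (Fin.snoc (y + 2 • z) (a + 2 * b) : Cell (d + 1)) = Fin.snoc y a + 2 • Fin.snoc z b := by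
  ext i
  cases i using Fin.lastCases <;> simp

lemma cylinder_translationInvariants {L : Set (Cell d)} (hL : 0 ∈ L) :
    cylinder (translationInvariants A L) = translationInvariants A {z | Fin.init z ∈ L} := by
  ext F
  constructor
  · intro hF y z hz
    have slice_eq := slice_eq_of_mem_cylinder hF (a := y (Fin.last d) + 2 * z (Fin.last d))
      (b := y (Fin.last d)) (by simp)
    rw [← Fin.snoc_init_self y, ← Fin.snoc_init_self z, ← snoc_add_two_nsmul]
    exact (congrFun slice_eq _).trans ((hF _).2 _ _ hz)
  · refine fun hF a => ⟨funext fun y => ?_, fun y z hz => ?_⟩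
    · have := hF (Fin.snoc y a) (Fin.snoc 0 1) (by simpa using hL)
      rwa [← snoc_add_two_nsmul, smul_zero, add_zero] at this
    · have := hF (Fin.snoc y a) (Fin.snoc z 0) (by simpa using hz)
      rwa [← snoc_add_two_nsmul, mul_zero, add_zero] at this

lemma glue_slice (hF : F ∈ cylinder P) : glue (slice d A 0 F) (slice d A 1 F) = F :=
  ext_slice fun a => by
    rw [slice_glue]
    split_ifs with ha
    · exact slice_eq_of_mem_cylinder hF (by simpa using ha)
    · exact slice_eq_of_mem_cylinder hF (by grind)

lemma glue_mem_cylinder {f g : Cell d → A} (hf : f ∈ P) (hg : g ∈ P) : glue f g ∈ cylinder P :=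
  fun a => by
    simp only [slice_glue, Int.even_add, even_two, iff_true]
    split_ifs
    exacts [⟨trivial, hf⟩, ⟨trivial, hg⟩]

lemma even_units_smul_sub (u : ℤˣ) (a : ℤ) : Even (u • a - a) := by
  rcases Int.units_eq_one_or u with rfl | rfl
  · simp
  · exact ⟨-a, by simp [sub_eq_add_neg]⟩

lemma slice_cylinderOp_of_mem (hF : F ∈ cylinder P) (a : ℤ) :
    slice d A a (cylinderOp u S F) = u ^ a • S (slice d A a F) := by
  rw [slice_cylinderOp, slice_eq_of_mem_cylinder hF (even_units_smul_sub u a)]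

lemma slice_coboundary (hF : F ∈ cylinder P) (a : ℤ) :
    slice d A a (coboundary (d + 1) A F) = coboundary d A (slice d A a F) :=
  funext fun z => coboundary_snoc (fun w b => congrFun (hF b).1 w) z a

lemma units_zpow_of_even (u : ℤˣ) {a : ℤ} (ha : Even a) : u ^ a = 1 := by
  obtain ⟨k, rfl⟩ := ha
  rw [_root_.zpow_add, ← mul_zpow, Int.units_mul_self, _root_.one_zpow]

lemma cylinderOp_mem_cylinder_top (hF : F ∈ cylinder (⊤ : Submodule ℤ (Cell d → A))) :
    cylinderOp u S F ∈ cylinder (⊤ : Submodule ℤ (Cell d → A)) := fun a => by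
  rw [slice_cylinderOp_of_mem hF, slice_cylinderOp_of_mem hF, (hF a).1, _root_.zpow_add,
    units_zpow_of_even u even_two, mul_one]
  exact ⟨rfl, trivial⟩

lemma slice_cyclicDiff_of_even (hF : F ∈ cylinder P) {a : ℤ} (ha : Even a) (n : ℤ) :
    slice d A a (cyclicDiff q (cylinderOp u S) n F) = cyclicDiff q S n (slice d A a F) := by
  refine map_cyclicDiff_of_intertwining (U := cylinder ⊤) (c := 0) (fun f z hf => hf _ ?_)
    (fun _ => cylinderOp_mem_cylinder_top) (fun G hG => ?_) (fun G hG => slice_coboundary hG a)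
    (by simp) fun b => ⟨(hF b).1, trivial⟩
  · rw [dim_snoc, if_neg (Int.not_odd_iff_even.2 ha)]
  · rw [slice_cylinderOp_of_mem hG, units_zpow_of_even u ha, one_smul]

lemma slice_cyclicDiff_of_odd (hF : F ∈ cylinder P) {a : ℤ} (ha : Odd a) (n : ℤ) :
    slice d A a (cyclicDiff q (cylinderOp u S) n F) =
      cyclicDiff q (u • S) (n - 1) (slice d A a F) := by
  refine map_cyclicDiff_of_intertwining (U := cylinder ⊤) (c := 1) (fun f z hf => hf _ ?_)
    (fun _ => cylinderOp_mem_cylinder_top) (fun G hG => ?_) (fun G hG => slice_coboundary hG a)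
    (by grind) fun b => ⟨(hF b).1, trivial⟩
  · rw [dim_snoc, if_pos ha]
  · obtain ⟨b, rfl⟩ := ha
    rw [slice_cylinderOp_of_mem hG, _root_.zpow_add_one,
      units_zpow_of_even u (even_two_mul b), one_mul]
    rfl

lemma slice_mem_suppLE_of_even (hF : F ∈ suppLE (d + 1) A n) {a : ℤ} (ha : Even a) :
    slice d A a F ∈ suppLE d A n := fun z hz =>
  hF _ (by rwa [dim_snoc, if_neg (Int.not_odd_iff_even.2 ha)])

lemma slice_mem_suppLE_of_odd (hF : F ∈ suppLE (d + 1) A n) {a : ℤ} (ha : Odd a) :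
    slice d A a F ∈ suppLE d A (n - 1) := fun z hz =>
  hF _ (by rw [dim_snoc, if_pos ha]; push_cast; omega)

lemma glue_mem_suppLE {f g : Cell d → A} (hf : f ∈ suppLE d A n) (hg : g ∈ suppLE d A (n - 1)) :
    glue f g ∈ suppLE (d + 1) A n := fun y hy => by
  rw [← Fin.snoc_init_self y, dim_snoc] at hy
  rw [glue]
  split_ifs with heven
  · exact hf _ (by rwa [if_neg (Int.not_odd_iff_even.2 heven)] at hy)
  · rw [if_pos (Int.not_even_iff_odd.1 heven)] at hy
    exact hg _ (by push_cast at hy; omega)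

variable (d A) in
/-- The pair of slices of a cochain in the positions `0` and `1`. -/
def slices : (Cell (d + 1) → A) →ₗ[ℤ] (Cell d → A) × (Cell d → A) :=
  (slice d A 0).prod (slice d A 1)

lemma slices_cyclicDiff (hF : F ∈ cylinder P) (n : ℤ) :
    slices d A (cyclicDiff q (cylinderOp u S) n F) =
      (cyclicDiff q S n (slice d A 0 F), cyclicDiff q (u • S) (n - 1) (slice d A 1 F)) :=
  Prod.ext (slice_cyclicDiff_of_even hF .zero n) (slice_cyclicDiff_of_odd hF odd_one n)

lemma slices_glue (f g : Cell d → A) : slices d A (glue f g) = (f, g) :=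
  Prod.ext ((slice_glue f g 0).trans (if_pos .zero)) ((slice_glue f g 1).trans (if_neg (by decide)))

lemma slices_injOn_cylinder : Set.InjOn (slices d A) (cylinder P) := fun F hF G hG h => by
  obtain ⟨h₀, h₁⟩ := Prod.ext_iff.1 h
  rw [← glue_slice hF, ← glue_slice hG]
  exact congrArg₂ glue h₀ h₁

lemma cyclicDiff_mem_cylinder_top (hF : F ∈ cylinder P) (n : ℤ) :
    cyclicDiff q (cylinderOp u S) n F ∈ cylinder (⊤ : Submodule ℤ (Cell d → A)) := fun a => by
  refine ⟨?_, trivial⟩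
  rcases Int.even_or_odd a with ha | ha
  · rw [slice_cyclicDiff_of_even hF ha, slice_cyclicDiff_of_even hF (ha.add even_two), (hF a).1]
  · rw [slice_cyclicDiff_of_odd hF ha, slice_cyclicDiff_of_odd hF (ha.add_even even_two), (hF a).1]

lemma map_slices_cylinder (n : ℤ) : (cylinder P ⊓ suppLE (d + 1) A n).map (slices d A) =
    (P ⊓ suppLE d A n).prod (P ⊓ suppLE d A (n - 1)) := by
  ext ⟨f, g⟩
  constructor
  · rintro ⟨F, ⟨hF, hn⟩, h⟩
    obtain ⟨rfl, rfl⟩ := Prod.ext_iff.1 h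
    exact ⟨⟨(hF 0).2, slice_mem_suppLE_of_even hn .zero⟩,
      ⟨(hF 1).2, slice_mem_suppLE_of_odd hn odd_one⟩⟩
  · rintro ⟨⟨hf, hfn⟩, hg, hgn⟩
    exact ⟨_, ⟨glue_mem_cylinder hf hg, glue_mem_suppLE hfn hgn⟩, slices_glue f g⟩

lemma map_slices_cocycles (n : ℤ) :
    (cylinder P ⊓ suppLE (d + 1) A n ⊓ LinearMap.ker (cyclicDiff q (cylinderOp u S) n)).map
        (slices d A) =
      (P ⊓ suppLE d A n ⊓ LinearMap.ker (cyclicDiff q S n)).prod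
        (P ⊓ suppLE d A (n - 1) ⊓ LinearMap.ker (cyclicDiff q (u • S) (n - 1))) := by
  have mem_map {x} := SetLike.ext_iff.1 (map_slices_cylinder (P := P) n) x
  ext x
  constructor
  · rintro ⟨F, ⟨hF, hclosed⟩, rfl⟩
    obtain ⟨h₀, h₁⟩ := mem_map.1 ⟨F, hF, rfl⟩
    have h := slices_cyclicDiff (q := q) (u := u) (S := S) hF.1 n
    rw [LinearMap.mem_ker.1 hclosed, map_zero] at h
    exact ⟨⟨h₀, (Prod.ext_iff.1 h).1.symm⟩, ⟨h₁, (Prod.ext_iff.1 h).2.symm⟩⟩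
  · rintro ⟨⟨h₀, h₀'⟩, h₁, h₁'⟩
    obtain ⟨F, hF, rfl⟩ := mem_map.2 ⟨h₀, h₁⟩
    refine ⟨F, ⟨hF, ?_⟩, rfl⟩
    refine slices_injOn_cylinder (cyclicDiff_mem_cylinder_top hF.1 n) (Submodule.zero_mem _) ?_
    rw [slices_cyclicDiff hF.1, map_zero]
    exact Prod.ext h₀' h₁'

lemma map_slices_coboundaries (n : ℤ) :
    ((cylinder P ⊓ suppLE (d + 1) A n).map (cyclicDiff q (cylinderOp u S) n)).map (slices d A) =
      ((P ⊓ suppLE d A n).map (cyclicDiff q S n)).prod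
        ((P ⊓ suppLE d A (n - 1)).map (cyclicDiff q (u • S) (n - 1))) := by
  have mem_map {x} := SetLike.ext_iff.1 (map_slices_cylinder (P := P) n) x
  ext ⟨f, g⟩
  constructor
  · rintro ⟨_, ⟨F, hF, rfl⟩, h⟩
    rw [slices_cyclicDiff hF.1] at h
    obtain ⟨rfl, rfl⟩ := Prod.ext_iff.1 h
    obtain ⟨h₀, h₁⟩ := mem_map.1 ⟨F, hF, rfl⟩
    exact ⟨⟨_, h₀, rfl⟩, ⟨_, h₁, rfl⟩⟩
  · rintro ⟨⟨f', hf', rfl⟩, g', hg', rfl⟩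
    obtain ⟨F, hF, h⟩ := mem_map.2 (show (f', g') ∈ _ from ⟨hf', hg'⟩)
    obtain ⟨rfl, rfl⟩ := Prod.ext_iff.1 h
    exact ⟨_, ⟨F, hF, rfl⟩, slices_cyclicDiff hF.1 n⟩

/-- The Künneth formula for the product with a circle on which the cyclic group acts by `±1`. -/
theorem nonempty_totalCohomology_cylinder_equiv (n : ℤ) :
    Nonempty (TotalCohomology q (cylinderOp u S) (cylinder P) n ≃ₗ[ℤ]
      TotalCohomology q S P n × TotalCohomology q (u • S) P (n - 1)) := by
  have slices_inj : ∀ z ∈ cylinder P ⊓ suppLE (d + 1) A n ⊓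
      LinearMap.ker (cyclicDiff q (cylinderOp u S) n),
      ∀ b ∈ (cylinder P ⊓ suppLE (d + 1) A (n - 1)).map (cyclicDiff q (cylinderOp u S) (n - 1)),
        slices d A z = slices d A b → z = b := by
    rintro z ⟨⟨hz, -⟩, -⟩ _ ⟨F, ⟨hF, -⟩, rfl⟩ h
    exact slices_injOn_cylinder (P := ⊤) (fun a => ⟨(hz a).1, trivial⟩)
      (cyclicDiff_mem_cylinder_top hF (n - 1)) h
  obtain ⟨e⟩ := Subquotient.nonempty_equiv_of_map_eq (slices d A) slices_inj
    (map_slices_cocycles n) (map_slices_coboundaries (n - 1))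
  exact ⟨e.trans (Subquotient.prodEquiv _ _ _ _)⟩

end Cylinder

section CellClasses

/-- A partition of the cells of `ℝ^d` into classes of cells of the same dimension, labelled by `ι`,
with a representative of each class. -/
structure CellClasses (d : ℕ) (ι : Type*) where
  /-- the class of a cell -/
  cls : Cell d → ι
  /-- the chosen representative of a class -/
  rep : ι → Cell d
  cls_rep : ∀ i, cls (rep i) = i
  dim_rep_cls : ∀ y, dim (rep (cls y)) = dim y

namespace CellClasses

variable {d q : ℕ} {ι A : Type*} [AddCommGroup A] (C : CellClasses d ι)

variable (A) in
/-- The cochains that are constant on the classes. -/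
def invariants : Submodule ℤ (Cell d → A) := LinearMap.range (LinearMap.funLeft ℤ A C.cls)

variable (A) in
/-- The functions on the classes that correspond to the cochains supported in dimensions `≤ n`. -/
def classSuppLE (n : ℤ) : Submodule ℤ (ι → A) := (suppLE d A n).comap (LinearMap.funLeft ℤ A C.cls)

/-- The total differential of invariant cochains, in terms of functions on the classes. -/
def classDiff (q : ℕ) (S : Module.End ℤ (Cell d → A)) (n : ℤ) : Module.End ℤ (ι → A) :=
  LinearMap.funLeft ℤ A C.rep ∘ₗ cyclicDiff q S n ∘ₗ LinearMap.funLeft ℤ A C.cls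

variable {C} {S : Module.End ℤ (Cell d → A)} {f : Cell d → A} {n : ℤ}

lemma mem_classSuppLE {x : ι → A} :
    x ∈ C.classSuppLE A n ↔ ∀ i, n < dim (C.rep i) → x i = 0 := by
  constructor
  · intro hx i hi
    rw [← C.cls_rep i]
    exact hx _ hi
  · exact fun hx y hy => hx _ (by rwa [C.dim_rep_cls])

lemma classSuppLE_int [Finite ι] (n : ℤ) :
    C.classSuppLE ℤ n = Pi.spanSubset ℤ {i | dim (C.rep i) ≤ n} := by
  ext x
  simp only [mem_classSuppLE, Pi.mem_spanSubset_iff, Set.mem_ofPred_eq, not_le]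

lemma mem_invariants_iff :
    f ∈ C.invariants A ↔ LinearMap.funLeft ℤ A (C.rep ∘ C.cls) f = f := by
  constructor
  · rintro ⟨x, rfl⟩
    exact funext fun y => congrArg x (C.cls_rep _)
  · exact fun hf => ⟨LinearMap.funLeft ℤ A C.rep f, hf⟩

lemma injOn_funLeft_rep : Set.InjOn (LinearMap.funLeft ℤ A C.rep) (C.invariants A) :=
  fun f hf g hg h => by
    rw [← mem_invariants_iff.1 hf, ← mem_invariants_iff.1 hg]
    exact congrArg (LinearMap.funLeft ℤ A C.cls) h

lemma cyclicDiff_mem_invariants (hδ : ∀ f ∈ C.invariants A, coboundary d A f ∈ C.invariants A)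
    (hS : ∀ f ∈ C.invariants A, S f ∈ C.invariants A) (hf : f ∈ C.invariants A) :
    cyclicDiff q S n f ∈ C.invariants A := by
  have fixed {g : Cell d → A} (hg : g ∈ C.invariants A) := mem_invariants_iff.1 hg
  have h := map_cyclicDiff_of_intertwining (Θ := LinearMap.funLeft ℤ A (C.rep ∘ C.cls)) (S := S)
    (S' := S) (q := q) (c := 0) (fun g y h => h _ (C.dim_rep_cls y)) hS
    (fun g hg => by rw [fixed hg, fixed (hS g hg)])
    (fun g hg => by rw [fixed hg, fixed (hδ g hg)]) (n := n) (n' := n) (by simp) hf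
  rw [fixed hf] at h
  exact mem_invariants_iff.2 h

lemma map_funLeft_rep (n : ℤ) :
    (C.invariants A ⊓ suppLE d A n).map (LinearMap.funLeft ℤ A C.rep) = C.classSuppLE A n := by
  ext x
  constructor
  · rintro ⟨f, ⟨-, hf⟩, rfl⟩
    exact mem_classSuppLE.2 fun i hi => hf _ hi
  · exact fun hx => ⟨_, ⟨⟨x, rfl⟩, hx⟩, funext fun i => congrArg x (C.cls_rep i)⟩

lemma classDiff_funLeft_rep (hf : f ∈ C.invariants A) :
    C.classDiff q S n (LinearMap.funLeft ℤ A C.rep f) =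
      LinearMap.funLeft ℤ A C.rep (cyclicDiff q S n f) :=
  congrArg (fun g => LinearMap.funLeft ℤ A C.rep (cyclicDiff q S n g)) (mem_invariants_iff.1 hf)

theorem nonempty_totalCohomology_equiv
    (hδ : ∀ f ∈ C.invariants A, coboundary d A f ∈ C.invariants A)
    (hS : ∀ f ∈ C.invariants A, S f ∈ C.invariants A) (n : ℤ) :
    Nonempty (TotalCohomology q S (C.invariants A) n ≃ₗ[ℤ]
      Subquotient (C.classSuppLE A n ⊓ LinearMap.ker (C.classDiff q S n))
        ((C.classSuppLE A (n - 1)).map (C.classDiff q S (n - 1)))) := by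
  have diff_mem {n : ℤ} {f : Cell d → A} (hf : f ∈ C.invariants A) :=
    cyclicDiff_mem_invariants (q := q) (n := n) hδ hS hf
  refine Subquotient.nonempty_equiv_of_map_eq (LinearMap.funLeft ℤ A C.rep) ?_ ?_ ?_
  · rintro z ⟨⟨hz, -⟩, -⟩ _ ⟨f, ⟨hf, -⟩, rfl⟩ h
    exact injOn_funLeft_rep hz (diff_mem hf) h
  · ext x
    rw [← map_funLeft_rep]
    constructor
    · rintro ⟨f, ⟨hf, hclosed⟩, rfl⟩
      refine ⟨⟨f, hf, rfl⟩, (classDiff_funLeft_rep hf.1).trans ?_⟩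
      rw [LinearMap.mem_ker.1 hclosed, map_zero]
    · rintro ⟨⟨f, hf, rfl⟩, hclosed⟩
      refine ⟨f, ⟨hf, injOn_funLeft_rep (diff_mem hf.1) (Submodule.zero_mem _) ?_⟩, rfl⟩
      exact (classDiff_funLeft_rep hf.1).symm.trans (hclosed.trans (map_zero _).symm)
  · ext x
    rw [← map_funLeft_rep]
    constructor
    · rintro ⟨_, ⟨f, hf, rfl⟩, rfl⟩
      exact ⟨_, ⟨f, hf, rfl⟩, classDiff_funLeft_rep hf.1⟩
    · rintro ⟨_, ⟨f, hf, rfl⟩, rfl⟩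
      exact ⟨_, ⟨f, hf, rfl⟩, (classDiff_funLeft_rep hf.1).symm⟩

end CellClasses

end CellClasses

section ThreeDimensionalFactor

/-- The quarter turn of the tiling of `ℝ³` about the first coordinate axis. -/
def quarterTurn (y : Cell 3) : Cell 3 := ![y 0, -y 2, y 1]

/-- The action of the quarter turn on integral cochains. The sign is that of the permutation which
the quarter turn induces on the edge directions of a cell, times that of the reversed edge. -/
def quarterTurnOp : Module.End ℤ (Cell 3 → ℤ) :=
  twist quarterTurn (fun y => (y 2 * (y 1 + 1)).negOnePow) 1

/-- The face-centred cubic lattice. -/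
def evenLattice : Set (Cell 3) := {z | Even (z 0 + z 1 + z 2)}

lemma mem_evenLattice {z : Cell 3} : z ∈ evenLattice ↔ (z 0 + z 1 + z 2) % 2 = 0 := Int.even_iff

/-- The number of the class of a cell of `ℝ³` modulo `evenLattice`. Its binary digits are the
parities of the three coordinates and of the sum of their halves. -/
def evenLatticeClass (y : Cell 3) : Fin 16 := Fin.ofNat 16
  (8 * (y 0 % 2) + 4 * (y 1 % 2) + 2 * (y 2 % 2) + (y 0 / 2 + y 1 / 2 + y 2 / 2) % 2).toNat

/-- The representative of a class that is obtained from a cell of the unit cube by moving it, if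
necessary, along the first coordinate axis. -/
def evenLatticeRep (i : Fin 16) : Cell 3 :=
  ![(i / 8 + 2 * (i % 2) : ℕ), (i / 4 % 2 : ℕ), (i / 2 % 2 : ℕ)]

lemma evenLatticeRep_evenLatticeClass (y : Cell 3) :
    evenLatticeRep (evenLatticeClass y) =
      ![y 0 % 2 + 2 * ((y 0 / 2 + y 1 / 2 + y 2 / 2) % 2), y 1 % 2, y 2 % 2] := by
  have parity (a : ℤ) : ∃ b : Fin 2, a % 2 = b := by
    rcases Int.emod_two_eq_zero_or_one a with h | h
    exacts [⟨0, h⟩, ⟨1, h⟩]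
  obtain ⟨a, ha⟩ := parity (y 0)
  obtain ⟨b, hb⟩ := parity (y 1)
  obtain ⟨c, hc⟩ := parity (y 2)
  obtain ⟨e, he⟩ := parity (y 0 / 2 + y 1 / 2 + y 2 / 2)
  rw [evenLatticeClass, ha, hb, hc, he]
  clear ha hb hc he
  revert a b c e
  decide

lemma exists_eq_evenLatticeRep_add (y : Cell 3) : ∃ z ∈ evenLattice,
    y = evenLatticeRep (evenLatticeClass y) + 2 • z := by
  refine ⟨![y 0 / 2 - (y 0 / 2 + y 1 / 2 + y 2 / 2) % 2, y 1 / 2, y 2 / 2], ?_, ?_⟩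
  · rw [mem_evenLattice]
    simp only [Matrix.cons_val]
    omega
  · rw [evenLatticeRep_evenLatticeClass]
    ext i
    fin_cases i <;> simp <;> omega

/-- The cells of `ℝ³` modulo the translations by the vectors in `evenLattice`. -/
def evenLatticeClasses : CellClasses 3 (Fin 16) where
  cls := evenLatticeClass
  rep := evenLatticeRep
  cls_rep := by decide +kernel
  dim_rep_cls y := by
    obtain ⟨z, -, hz⟩ := exists_eq_evenLatticeRep_add y
    exact (dim_add_two_nsmul _ z).symm.trans (congrArg dim hz.symm)

lemma evenLatticeClass_add_two_nsmul (y : Cell 3) {z : Cell 3} (hz : z ∈ evenLattice) :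
    evenLatticeClass (y + 2 • z) = evenLatticeClass y := by
  refine congrArg (Fin.ofNat 16) (congrArg Int.toNat ?_)
  rw [mem_evenLattice] at hz
  simp only [Pi.add_apply, two_nsmul]
  omega

lemma invariants_evenLatticeClasses :
    evenLatticeClasses.invariants ℤ = translationInvariants ℤ evenLattice := by
  ext f
  constructor
  · rintro ⟨x, rfl⟩ y z hz
    exact congrArg x (evenLatticeClass_add_two_nsmul y hz)
  · intro hf
    refine CellClasses.mem_invariants_iff.2 (funext fun y => ?_)
    obtain ⟨z, hz, hy⟩ := exists_eq_evenLatticeRep_add y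
    exact (hf _ z hz).symm.trans (congrArg f hy.symm)

lemma coboundary_mem_invariants {f : Cell 3 → ℤ} (hf : f ∈ evenLatticeClasses.invariants ℤ) :
    coboundary 3 ℤ f ∈ evenLatticeClasses.invariants ℤ := by
  rw [invariants_evenLatticeClasses] at hf ⊢
  exact fun y z hz => coboundary_add_two_nsmul (fun w => hf w z hz) y

lemma quarterTurnOp_mem_invariants {f : Cell 3 → ℤ} (hf : f ∈ evenLatticeClasses.invariants ℤ) :
    quarterTurnOp f ∈ evenLatticeClasses.invariants ℤ := by
  rw [invariants_evenLatticeClasses] at hf ⊢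
  intro y z hz
  have turn_add : quarterTurn (y + 2 • z) = quarterTurn y + 2 • quarterTurn z := by
    ext i
    fin_cases i <;> simp [quarterTurn, neg_add_rev, add_comm]
  have sign_eq : ((y + 2 • z) 2 * ((y + 2 • z) 1 + 1)).negOnePow =
      (y 2 * (y 1 + 1)).negOnePow := by
    rw [Int.negOnePow_eq_iff]
    simp [parity_simps]
  have turn_even : quarterTurn z ∈ evenLattice := by
    simp only [mem_evenLattice, quarterTurn, Matrix.cons_val] at hz ⊢
    omega
  rw [quarterTurnOp, twist_apply, twist_apply, turn_add, hf _ _ turn_even, sign_eq]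

end ThreeDimensionalFactor

section HolonomyModel

lemma swap_one_two_apply (i : Fin 5) : Equiv.swap 1 2 i = (![0, 2, 1, 3, 4] : Fin 5 → Fin 5) i := by
  revert i
  decide

/-- In the coordinates of this model `holM` acts on `ℝ⁵` by the inverse of a quarter turn in the
coordinates `1` and `2` and by reversing the coordinate `3`, and the lattice is the product of
`evenLattice` and `ℤ²`. -/
def holModel : LatticeModel 4 holM 5 where
  perm := Equiv.swap 1 2
  flip := ![1, -1, 1, -1, 1]
  orient y := (y 3 + y 2 * (y 1 + 1)).negOnePow
  orient_vertex y hy := by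
    have even_apply : ∀ i, Even (y i) := by
      simpa [Finset.filter_eq_empty_iff] using Finset.card_eq_zero.1 hy
    exact Int.negOnePow_even _ ((even_apply 3).add ((even_apply 2).mul_right _))
  orient_add_two_nsmul y z := by
    rw [Int.negOnePow_eq_iff]
    simp [parity_simps]
  orient_face y j hj := by
    fin_cases j <;>
      simp [swap_one_two_apply, incidence, Fin.sum_univ_five, signedPerm_apply, ← Int.negOnePow_add,
        ← Int.negOnePow_succ, Int.negOnePow_eq_iff, parity_simps] at hj ⊢ <;>
      grind
  iterate_eq y := by
    ext i
    fin_cases i <;> simp [signedPerm_apply, swap_one_two_apply, Units.neg_smul]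
  prod_orient y := by
    have exponent_sum : (y 3 + y 2 * (y 1 + 1)) + (-y 3 + y 1 * (-y 2 + 1)) +
        (y 3 + -y 2 * (-y 1 + 1)) + (-y 3 + -y 1 * (y 2 + 1)) = 0 := by ring
    simpa [Finset.prod_range_succ, signedPerm_apply, swap_one_two_apply, Units.neg_smul,
      Int.negOnePow_add, mul_assoc] using congrArg Int.negOnePow exponent_sum
  embed :=
    { toFun := fun v => ![v 2 + v 3 - v 4, v 2 + v 4, v 3, v 0, v 1]
      map_zero' := by decide
      map_add' := fun v w => by
        ext i
        fin_cases i <;> simp <;> ring }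
  coord y :=
    let s := (y 0 - 2 * (y 1 / 2) - 2 * (y 2 / 2)) / 4
    ![y 3 / 2, y 4 / 2, y 1 / 2 + s, y 2 / 2, -s]
  map_embed_mulVec v := by
    ext i
    fin_cases i <;>
      simp [signedPerm_apply, swap_one_two_apply, Units.neg_smul, holM, dotProduct,
        Fin.sum_univ_five]
    ring
  coord_sub y v := by
    ext i
    fin_cases i <;> simp <;> omega

lemma op_holModel : holModel.op 1 = cylinderOp 1 (cylinderOp (-1) quarterTurnOp) := by
  refine LinearMap.ext fun F => funext fun y => ?_
  have map_eq : holModel.map y =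
      Fin.snoc (Fin.snoc (quarterTurn (Fin.init (Fin.init y))) (-y 3) : Cell 4) (y 4) := by
    ext i
    fin_cases i <;>
      simp [holModel, signedPerm_apply, swap_one_two_apply, quarterTurn, Fin.snoc, Fin.init,
        Units.neg_smul]
    rfl
  have orient_eq : holModel.orient y = (-1) ^ y 3 * (y 2 * (y 1 + 1)).negOnePow :=
    Int.negOnePow_add _ _
  rw [twist_apply, map_eq, orient_eq]
  simp [cylinderOp, quarterTurnOp, twist_apply, slice_apply, Fin.init, mul_smul]

lemma mem_range_embed_holModel {z : Cell 5} : z ∈ Set.range holModel.embed ↔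
    Fin.init (Fin.init z) ∈ evenLattice := by
  constructor
  · rintro ⟨v, rfl⟩
    exact ⟨v 2 + v 3, by simp [holModel, Fin.init]; ring⟩
  · rintro ⟨c, hc⟩
    refine ⟨![z 3, z 4, c - z 2, z 2, z 1 + z 2 - c], ?_⟩
    ext i
    fin_cases i <;> simp [holModel, Fin.init] at hc ⊢
    omega

lemma periodic_holModel :
    holModel.periodic = cylinder (cylinder (translationInvariants ℤ evenLattice)) := by
  rw [cylinder_translationInvariants (by simp [evenLattice]),
    cylinder_translationInvariants (by simp [evenLattice, Fin.init])]
  ext F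
  constructor
  · intro hF y z hz
    obtain ⟨v, rfl⟩ := mem_range_embed_holModel.2 hz
    simpa using hF y (-v)
  · intro hF y v
    simpa [sub_eq_add_neg] using hF y _ (mem_range_embed_holModel.1 ⟨-v, rfl⟩)

end HolonomyModel

section CyclicFactors

lemma exists_equiv_of_map_univ_eq {κ κ' α : Type*} [Fintype κ] [Fintype κ'] {a : κ → α} {b : κ' → α}
    (h : Finset.univ.val.map a = Finset.univ.val.map b) : ∃ e : κ ≃ κ', ∀ j, b (e j) = a j := by
  classical
  have card_fiber (c : α) : Fintype.card {j // a j = c} = Fintype.card {j // b j = c} := by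
    simpa [Multiset.count_map, Fintype.card_subtype, eq_comm, Finset.card_def] using
      congrArg (Multiset.count c) h
  exact ⟨.ofFiberEquiv fun c => Fintype.equivOfCardEq (card_fiber c), fun j =>
    Equiv.ofFiberEquiv_map _ j⟩

/-- The group `G` is a direct sum of cyclic groups whose orders are the members of `m`; the order
`0` stands for an infinite cyclic group. -/
def HasCyclicFactors (G : Type*) [Add G] (m : Multiset ℕ) : Prop :=
  ∃ (κ : Type) (_ : Fintype κ) (a : κ → ℕ),
    Finset.univ.val.map a = m ∧ Nonempty (G ≃+ ∀ j, ZMod (a j))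

namespace HasCyclicFactors

variable {G G' : Type*} [AddZeroClass G] [AddZeroClass G'] {m m' : Multiset ℕ}

lemma of_equiv (h : HasCyclicFactors G' m) (e : G ≃+ G') : HasCyclicFactors G m :=
  let ⟨κ, hκ, a, ha, ⟨e'⟩⟩ := h
  ⟨κ, hκ, a, ha, ⟨e.trans e'⟩⟩

lemma pi_zmod (n a : ℕ) : HasCyclicFactors (Fin n → ZMod a) (Multiset.replicate n a) :=
  ⟨Fin n, inferInstance, fun _ => a, by simp, ⟨.refl _⟩⟩

lemma zmod (a : ℕ) : HasCyclicFactors (ZMod a) {a} :=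
  ⟨Unit, inferInstance, fun _ => a, rfl, ⟨(RingEquiv.piUnique fun _ => ZMod a).symm.toAddEquiv⟩⟩

lemma zero [Subsingleton G] : HasCyclicFactors G 0 :=
  ⟨Empty, inferInstance, Empty.elim, rfl,
    ⟨⟨⟨0, 0, fun _ => Subsingleton.elim _ _, fun _ => Subsingleton.elim _ _⟩,
      fun _ _ => Subsingleton.elim _ _⟩⟩⟩

lemma prod :
    HasCyclicFactors G m → HasCyclicFactors G' m' → HasCyclicFactors (G × G') (m + m') := by
  rintro ⟨κ, _, a, rfl, ⟨e⟩⟩ ⟨κ', _, a', rfl, ⟨e'⟩⟩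
  refine ⟨κ ⊕ κ', inferInstance, Sum.elim a a', ?_, ⟨(e.prodCongr e').trans
    (LinearEquiv.sumPiEquivProdPi ℤ κ κ' fun j => ZMod (Sum.elim a a' j)).symm.toAddEquiv⟩⟩
  rw [← Finset.univ_disjSum_univ, Finset.val_disjSum, Multiset.map_disjSum]
  rfl

theorem nonempty_addEquiv (h : HasCyclicFactors G m) (h' : HasCyclicFactors G' m')
    (hm : m = m') : Nonempty (G ≃+ G') := by
  obtain ⟨κ, _, a, ha, ⟨e⟩⟩ := h
  obtain ⟨κ', _, a', ha', ⟨e'⟩⟩ := h'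
  obtain ⟨σ, hσ⟩ := exists_equiv_of_map_univ_eq (ha.trans (hm.trans ha'.symm))
  obtain rfl : a' ∘ σ = a := funext hσ
  exact ⟨e.trans ((RingEquiv.piCongrLeft (fun j => ZMod (a' j)) σ).toAddEquiv.trans e'.symm)⟩

end HasCyclicFactors

/-- Classes `s j` of order dividing `a j` and functionals `p j` that are dual to them modulo the
`a j` split a subquotient into cyclic groups once the `s j` generate it. -/
theorem Subquotient.nonempty_equiv_pi_zmod {U κ : Type*} [AddCommGroup U] [Fintype κ]
    [DecidableEq κ] {Z B : Submodule ℤ U} (a : κ → ℕ) (s : κ → U) (p : κ → U →ₗ[ℤ] ℤ)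
    (hs : ∀ j, s j ∈ Z) (has : ∀ j, (a j : ℤ) • s j ∈ B) (hpB : ∀ j, ∀ b ∈ B, (a j : ℤ) ∣ p j b)
    (hps : ∀ i j, (a i : ℤ) ∣ p i (s j) - if i = j then 1 else 0)
    (hZ : ∀ z ∈ Z, z - ∑ j, p j z • s j ∈ B) :
    Nonempty (Subquotient Z B ≃+ ∀ j, ZMod (a j)) := by
  let ψ : Z →ₗ[ℤ] ∀ j, ZMod (a j) := LinearMap.pi fun j =>
    (Int.castAddHom (ZMod (a j))).toIntLinearMap ∘ₗ p j ∘ₗ Z.subtype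
  have ψ_apply (z : Z) (j : κ) : ψ z j = (p j z : ZMod (a j)) := rfl
  have p_gen (i j : κ) : (p i (s j) : ZMod (a i)) = if i = j then 1 else 0 := by
    have := (ZMod.intCast_zmod_eq_zero_iff_dvd _ _).2 (hps i j)
    rw [Int.cast_sub, sub_eq_zero] at this
    rw [this]
    split_ifs <;> simp
  refine ⟨(equivOfSurjective ψ (fun t => ?_) fun z => ?_).toAddEquiv⟩
  · choose c hc using fun j => ZMod.intCast_surjective (t j)
    refine ⟨∑ j, c j • ⟨s j, hs j⟩, funext fun i => ?_⟩
    simp [ψ_apply, map_sum, p_gen, hc]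
  · simp only [funext_iff, ψ_apply, Pi.zero_apply, ZMod.intCast_zmod_eq_zero_iff_dvd]
    refine ⟨fun hz => ?_, fun hz j => hpB j _ hz⟩
    rw [← sub_add_cancel (z : U) (∑ j, p j z • s j)]
    refine B.add_mem (hZ z z.2) (B.sum_mem fun j _ => ?_)
    obtain ⟨c, hc⟩ := hz j
    rw [hc, mul_comm, mul_smul]
    exact B.smul_mem c (has j)

end CyclicFactors

section HomologyCertificate

variable {ι : Type*} [DecidableEq ι]

/-- The vector with the listed entries. -/
def sparseVector (l : List (ι × ℤ)) : ι → ℤ := (l.map fun t => Pi.single t.1 t.2).sum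

/-- The linear form with the listed coefficients. -/
def sparseForm (l : List (ι × ℤ)) : (ι → ℤ) →ₗ[ℤ] ℤ :=
  (l.map fun t => t.2 • LinearMap.proj t.1).sum

/-- The endomorphism whose matrix has the listed entries; `(i, j, c)` stands for the entry `c` in
row `i` and column `j`. -/
def sparseMatrix (l : List (ι × ι × ℤ)) : Module.End ℤ (ι → ℤ) :=
  LinearMap.pi fun i => sparseForm ((l.filter fun t => t.1 = i).map Prod.snd)

/-- Data exhibiting the homology of `D'` and `D` at their common term as a sum of `r` cyclic
groups: cocycles that generate the summands, elements showing that their orders are as claimed,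
forms that are dual to them, and a homotopy which contracts the rest. The homotopy is integral on
the side of `D'`; on the side of `D`, where it only has to exist rationally, it is given by
`correction` up to a common denominator. -/
structure HomologyCertificate (ι : Type*) (r : ℕ) where
  /-- the orders of the cyclic summands, where `0` stands for an infinite summand -/
  order : Fin r → ℕ
  /-- cocycles whose classes generate the summands -/
  generator : Fin r → ι → ℤ
  /-- preimages under `D'` of `order j • generator j` -/
  primitive : Fin r → ι → ℤ
  /-- the coordinates of a cocycle in terms of the generators -/
  functional : Fin r → (ι → ℤ) →ₗ[ℤ] ℤ
  /-- the part of the homotopy that is followed by `D'` -/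
  homotopy : Module.End ℤ (ι → ℤ)
  /-- the multiple of the part of the homotopy that is preceded by `D` -/
  correction : Module.End ℤ (ι → ℤ)

namespace HomologyCertificate

variable {r : ℕ}

/-- The certificate is valid for `D'` on the vectors supported on `J'`, followed by `D` on those
supported on `J`; the denominator of the homotopy is `m`. -/
structure IsValid (C : HomologyCertificate ι r) (m : ℤ) (D' D : Module.End ℤ (ι → ℤ))
    (J' J : Set ι) : Prop where
  generator_eq_zero : ∀ j, ∀ i ∉ J, C.generator j i = 0
  map_generator : ∀ j, D (C.generator j) = 0
  primitive_eq_zero : ∀ j, ∀ i ∉ J', C.primitive j i = 0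
  map_primitive : ∀ j, D' (C.primitive j) = (C.order j : ℤ) • C.generator j
  order_dvd : ∀ j, ∀ i ∈ J', (C.order j : ℤ) ∣ C.functional j (D' (Pi.single i 1))
  order_dvd_sub : ∀ i j,
    (C.order i : ℤ) ∣ C.functional i (C.generator j) - if i = j then 1 else 0
  homotopy_eq_zero : ∀ j ∈ J, ∀ i ∉ J', C.homotopy (Pi.single j 1) i = 0
  smul_sub_eq : ∀ j ∈ J, m • (Pi.single j 1 - D' (C.homotopy (Pi.single j 1)) -
    ∑ i, C.functional i (Pi.single j 1) • C.generator i) = C.correction (D (Pi.single j 1))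

variable {C : HomologyCertificate ι r} {m : ℤ} {D' D : Module.End ℤ (ι → ℤ)} {J' J : Set ι}
  {x : ι → ℤ} [Finite ι]

namespace IsValid

lemma order_dvd_functional (hC : C.IsValid m D' D J' J) (j : Fin r) (hx : x ∈ Pi.spanSubset ℤ J') :
    (C.order j : ℤ) ∣ C.functional j (D' x) := by
  let multiples : Submodule ℤ (ι → ℤ) :=
    Submodule.comap (C.functional j ∘ₗ D') (Ideal.span {(C.order j : ℤ)})
  suffices x ∈ multiples from Ideal.mem_span_singleton.1 this
  refine Submodule.span_le.2 ?_ hx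
  rintro _ ⟨i, hi, rfl⟩
  rw [Pi.basisFun_apply]
  exact Ideal.mem_span_singleton.2 (hC.order_dvd j i hi)

lemma homotopy_mem (hC : C.IsValid m D' D J' J) (hx : x ∈ Pi.spanSubset ℤ J) :
    C.homotopy x ∈ Pi.spanSubset ℤ J' := by
  refine (Submodule.span_le (p := (Pi.spanSubset ℤ J').comap C.homotopy)).2 ?_ hx
  rintro _ ⟨j, hj, rfl⟩
  rw [Pi.basisFun_apply]
  exact Pi.mem_spanSubset_iff.2 (hC.homotopy_eq_zero j hj)

lemma smul_sub_eq_correction (hC : C.IsValid m D' D J' J) (hx : x ∈ Pi.spanSubset ℤ J) :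
    m • (x - D' (C.homotopy x) - ∑ i, C.functional i x • C.generator i) = C.correction (D x) := by
  let defect : Module.End ℤ (ι → ℤ) := m • (LinearMap.id - D' ∘ₗ C.homotopy -
    ∑ i, (C.functional i).smulRight (C.generator i))
  have defect_apply (y : ι → ℤ) : defect y =
      m • (y - D' (C.homotopy y) - ∑ i, C.functional i y • C.generator i) := by simp [defect]
  have eqOn : Set.EqOn defect (C.correction ∘ₗ D) (Pi.basisFun ℤ ι '' J) := by
    rintro _ ⟨j, hj, rfl⟩
    rw [Pi.basisFun_apply]
    exact (defect_apply _).trans (hC.smul_sub_eq j hj)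
  exact (defect_apply x).symm.trans (LinearMap.eqOn_span eqOn hx)

theorem hasCyclicFactors (hC : C.IsValid m D' D J' J) (hm : m ≠ 0) :
    HasCyclicFactors
      (Subquotient (Pi.spanSubset ℤ J ⊓ LinearMap.ker D) ((Pi.spanSubset ℤ J').map D'))
      (Finset.univ.val.map C.order) := by
  refine ⟨Fin r, inferInstance, C.order, rfl, Subquotient.nonempty_equiv_pi_zmod C.order
    C.generator C.functional (fun j => ?_) (fun j => ?_) ?_ hC.order_dvd_sub ?_⟩
  · exact ⟨Pi.mem_spanSubset_iff.2 (hC.generator_eq_zero j), hC.map_generator j⟩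
  · exact ⟨C.primitive j, Pi.mem_spanSubset_iff.2 (hC.primitive_eq_zero j), hC.map_primitive j⟩
  · rintro j _ ⟨y, hy, rfl⟩
    exact hC.order_dvd_functional j hy
  · rintro z ⟨hz, hclosed⟩
    have contraction := hC.smul_sub_eq_correction hz
    rw [LinearMap.mem_ker.1 hclosed, map_zero, smul_eq_zero_iff_right hm, sub_right_comm,
      sub_eq_zero] at contraction
    exact ⟨C.homotopy z, hC.homotopy_mem hz, contraction.symm⟩

end IsValid

end HomologyCertificate

end HomologyCertificate

section TurnCohomology

/-- The cohomology of the semidirect product of `evenLattice` and `ℤ/4`, the generator of `ℤ/4`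
acting on the lattice by the quarter turn and on the coefficients `ℤ` by the sign `u`. -/
abbrev TurnCohomology (u : ℤˣ) (n : ℤ) : Type :=
  TotalCohomology 4 (u • quarterTurnOp) (translationInvariants ℤ evenLattice) n

/-- The differentials on the 16 classes of cells which compute `TurnCohomology u`. -/
abbrev turnDiff (u : ℤˣ) (n : ℤ) : Module.End ℤ (Fin 16 → ℤ) :=
  evenLatticeClasses.classDiff 4 (u • quarterTurnOp) n

/-- The certificate, with denominator `4` of its homotopy, computes `TurnCohomology u n`. -/
abbrev CertifiesTurnCohomology {r : ℕ} (C : HomologyCertificate (Fin 16) r) (u : ℤˣ) (n : ℤ) :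
    Prop :=
  C.IsValid 4 (turnDiff u (n - 1)) (turnDiff u n)
    {i | dim (evenLatticeClasses.rep i) ≤ n - 1} {i | dim (evenLatticeClasses.rep i) ≤ n}

theorem CertifiesTurnCohomology.hasCyclicFactors {r : ℕ} {C : HomologyCertificate (Fin 16) r}
    {u : ℤˣ} {n : ℤ} (hC : CertifiesTurnCohomology C u n) :
    HasCyclicFactors (TurnCohomology u n) (Finset.univ.val.map C.order) := by
  obtain ⟨e⟩ := CellClasses.nonempty_totalCohomology_equiv (q := 4) (S := u • quarterTurnOp)
    (fun _ => coboundary_mem_invariants)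
    (fun _ hf => Submodule.smul_mem _ (u : ℤ) (quarterTurnOp_mem_invariants hf)) n
  rw [invariants_evenLatticeClasses, CellClasses.classSuppLE_int,
    CellClasses.classSuppLE_int] at e
  exact (HomologyCertificate.IsValid.hasCyclicFactors hC four_ne_zero).of_equiv e.toAddEquiv

theorem nonempty_turnCohomology_add_six_equiv (u : ℤˣ) (n : ℕ) :
    Nonempty (TurnCohomology u (n + 6 : ℕ) ≃+ TurnCohomology u (n + 4 : ℕ)) := by
  obtain ⟨e⟩ := nonempty_totalCohomology_add_two_equiv (q := 4) (S := u • quarterTurnOp)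
    (P := translationInvariants ℤ evenLattice) (n := (n + 4 : ℕ)) (by omega)
  exact ⟨e.toAddEquiv⟩

/-- `TurnCohomology 1 0` is `ℤ`. -/
def turnCertificate₀ : HomologyCertificate (Fin 16) 1 where
  order := ![0]
  generator := ![sparseVector [(0, 1), (1, 1)]]
  primitive := ![0]
  functional := ![sparseForm [(1, 1)]]
  homotopy := 0
  correction := sparseMatrix [(0, 2, -4)]

/-- `TurnCohomology 1 1` is `ℤ`. -/
def turnCertificate₁ : HomologyCertificate (Fin 16) 1 where
  order := ![0]
  generator := ![sparseVector [(8, 1), (9, 1)]]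
  primitive := ![0]
  functional := ![sparseForm [(2, 1), (9, 1)]]
  homotopy := sparseMatrix [(0, 2, -1)]
  correction := sparseMatrix [(0, 1, 1), (0, 8, 4), (1, 1, 1), (3, 3, -4), (3, 4, 4), (3, 8, -8),
    (4, 4, -4), (4, 8, 4), (5, 2, -4), (5, 8, 4), (8, 3, 4), (8, 4, -4), (8, 8, 8), (8, 10, 4)]

/-- `TurnCohomology 1 2` is `ℤ ⊕ ℤ/4`. -/
def turnCertificate₂ : HomologyCertificate (Fin 16) 2 where
  order := ![0, 4]
  generator := ![sparseVector [(6, 1), (7, 1)], sparseVector [(0, 1), (1, 1)]]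
  primitive := ![0, sparseVector [(0, 1), (1, 1)]]
  functional := ![sparseForm [(2, -1), (3, 1), (6, 1), (8, 2)], sparseForm [(0, 1), (8, -4)]]
  homotopy := sparseMatrix [(0, 8, 1), (2, 2, -1), (2, 8, 1), (3, 2, 1), (3, 3, -1), (3, 4, 1),
    (3, 8, -3), (4, 2, -1), (4, 4, -1), (4, 8, 2), (8, 2, -2), (8, 3, 1), (8, 4, -1), (8, 8, 4),
    (8, 10, 1)]
  correction := sparseMatrix [(1, 8, 4), (5, 2, -4), (5, 8, 4), (7, 2, 4), (7, 6, 4), (7, 8, -4),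
    (9, 2, -2), (9, 6, -2), (9, 8, 2), (9, 10, 2), (9, 11, -2), (9, 14, 2), (11, 6, 4),
    (11, 10, -4), (11, 12, 4), (11, 14, -4), (12, 2, 2), (12, 6, -2), (12, 8, -2), (12, 10, 2),
    (12, 11, -2), (12, 12, -4), (12, 14, 2), (13, 2, -2), (13, 6, -2), (13, 8, 2), (13, 10, -2),
    (13, 11, -2), (13, 14, 2)]

/-- `TurnCohomology 1 3` is `ℤ ⊕ ℤ/2`. -/
def turnCertificate₃ : HomologyCertificate (Fin 16) 2 where
  order := ![0, 2]
  generator := ![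
    sparseVector [(9, 1), (12, 1), (15, -1)],
    sparseVector [(9, 2), (12, 2), (14, 1), (15, -1)]]
  primitive := ![0, sparseVector [(0, 4), (5, -4), (6, -4), (8, 1), (10, 1), (11, 1), (13, -2)]]
  functional := ![
    sparseForm [(6, 2), (10, -1), (11, 1), (12, 1), (13, -1), (14, -2)],
    sparseForm [(5, 1), (6, -1), (8, 1), (10, 1), (11, -1), (14, 1)]]
  homotopy := sparseMatrix [(0, 8, -1), (5, 5, 1), (5, 8, 1), (6, 5, 1), (6, 6, -1), (6, 8, 1),
    (10, 5, -1), (10, 8, -1), (10, 10, -1), (10, 11, 1), (10, 13, 1), (11, 11, -1), (13, 5, 1),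
    (13, 8, 1), (13, 11, -1), (13, 13, -1)]
  correction := sparseMatrix [(0, 1, 1), (0, 8, 4), (1, 1, 1), (2, 3, -4), (2, 4, 4), (2, 5, -4),
    (2, 8, -12), (3, 5, 4), (3, 8, 4), (4, 3, -4), (4, 5, -4), (4, 8, -8), (7, 4, 2), (7, 5, -2),
    (7, 6, 2), (7, 8, -4), (9, 3, 4), (9, 5, 4), (9, 8, 8), (9, 12, -4), (15, 4, 2), (15, 5, -2),
    (15, 6, 2), (15, 8, -4), (15, 14, 4)]

/-- `TurnCohomology 1 4` is `ℤ/4 ⊕ ℤ/2`. -/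
def turnCertificate₄ : HomologyCertificate (Fin 16) 2 where
  order := ![4, 2]
  generator := ![sparseVector [(0, 1), (1, 1)], sparseVector [(6, 1), (7, 1)]]
  primitive := ![sparseVector [(0, 1), (1, 1)], sparseVector [(6, 1), (14, 1)]]
  functional := ![sparseForm [(0, 1), (8, -4)], sparseForm [(2, -1), (3, 1), (6, 1), (8, 2)]]
  homotopy := sparseMatrix [(0, 8, 1), (2, 2, -1), (2, 8, 1), (3, 2, 1), (3, 3, -1), (3, 4, 1),
    (3, 8, -3), (4, 2, -1), (4, 4, -1), (4, 8, 2), (8, 2, -2), (8, 3, 1), (8, 4, -1), (8, 8, 4),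
    (8, 10, 1), (14, 14, -1)]
  correction := sparseMatrix [(1, 8, 4), (5, 2, -4), (5, 8, 4), (7, 2, 4), (7, 6, 4), (7, 8, -4),
    (9, 8, 1), (9, 9, 1), (11, 2, -4), (11, 8, 2), (11, 9, -2), (11, 11, -4), (11, 12, 4),
    (12, 2, 4), (12, 8, -3), (12, 9, 1), (12, 12, -4), (13, 8, 1), (13, 9, 1), (13, 10, -4),
    (15, 2, -2), (15, 6, -2), (15, 8, 1), (15, 9, -1), (15, 10, 2), (15, 11, -2), (15, 14, 2)]

/-- `TurnCohomology 1 5` is `ℤ/4 ⊕ ℤ/2`. -/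
def turnCertificate₅ : HomologyCertificate (Fin 16) 2 where
  order := ![4, 2]
  generator := ![sparseVector [(9, 1), (12, 1), (15, -1)], sparseVector [(14, 1), (15, 1)]]
  primitive := ![
    sparseVector [(0, 4), (5, -4), (6, -4), (8, 1), (10, 1), (11, 1), (13, -2), (14, -1)],
    sparseVector [(14, 1)]]
  functional := ![
    sparseForm [(8, 1), (9, 1)],
    sparseForm [(5, 1), (6, -1), (8, 1), (10, 1), (11, -1), (14, 1)]]
  homotopy := sparseMatrix [(0, 8, -1), (5, 5, 1), (5, 8, 1), (6, 5, 1), (6, 6, -1), (6, 8, 1),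
    (10, 5, -1), (10, 8, -1), (10, 10, -1), (10, 11, 1), (10, 13, 1), (11, 11, -1), (13, 5, 1),
    (13, 8, 1), (13, 11, -1), (13, 13, -1)]
  correction := sparseMatrix [(0, 1, 1), (0, 8, 4), (1, 1, 1), (2, 3, -4), (2, 4, 4), (2, 5, -4),
    (2, 8, -12), (3, 5, 4), (3, 8, 4), (4, 3, -4), (4, 5, -4), (4, 8, -8), (7, 4, 2), (7, 5, -2),
    (7, 6, 2), (7, 8, -4), (12, 3, -4), (12, 5, -4), (12, 8, -8), (12, 12, 4), (15, 3, 4),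
    (15, 4, 2), (15, 5, 2), (15, 6, 2), (15, 8, 4), (15, 12, -4), (15, 14, 4)]

/-- The orders of the cyclic summands of `TurnCohomology 1 n`. -/
def turnFactors : ℕ → Multiset ℕ
  | 0 | 1 => {0}
  | 2 => {0, 4}
  | 3 => {0, 2}
  | _ => {4, 2}

theorem hasCyclicFactors_turnCohomology_one :
    ∀ n : ℕ, HasCyclicFactors (TurnCohomology 1 n) (turnFactors n)
  | 0 => CertifiesTurnCohomology.hasCyclicFactors (C := turnCertificate₀)
      (by constructor <;> decide +kernel)
  | 1 => CertifiesTurnCohomology.hasCyclicFactors (C := turnCertificate₁)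
      (by constructor <;> decide +kernel)
  | 2 => CertifiesTurnCohomology.hasCyclicFactors (C := turnCertificate₂)
      (by constructor <;> decide +kernel)
  | 3 => CertifiesTurnCohomology.hasCyclicFactors (C := turnCertificate₃)
      (by constructor <;> decide +kernel)
  | 4 => CertifiesTurnCohomology.hasCyclicFactors (C := turnCertificate₄)
      (by constructor <;> decide +kernel)
  | 5 => CertifiesTurnCohomology.hasCyclicFactors (C := turnCertificate₅)
      (by constructor <;> decide +kernel)
  | n + 6 => by
    obtain ⟨e⟩ := nonempty_turnCohomology_add_six_equiv 1 n
    exact (hasCyclicFactors_turnCohomology_one (n + 4)).of_equiv e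

/-- `TurnCohomology (-1) 0` is `0`. -/
def negTurnCertificate₀ : HomologyCertificate (Fin 16) 0 where
  order := ![]
  generator := ![]
  primitive := ![]
  functional := ![]
  homotopy := 0
  correction := sparseMatrix [(0, 1, -2), (0, 2, -4), (1, 1, -2)]

/-- `TurnCohomology (-1) 1` is `ℤ/2`. -/
def negTurnCertificate₁ : HomologyCertificate (Fin 16) 1 where
  order := ![2]
  generator := ![sparseVector [(0, 1), (1, 1)]]
  primitive := ![sparseVector [(0, -1), (1, -1)]]
  functional := ![sparseForm [(1, 1)]]
  homotopy := sparseMatrix [(0, 2, -1)]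
  correction := sparseMatrix [(0, 2, 6), (0, 3, -2), (0, 5, 4), (0, 6, 2), (3, 2, -4), (3, 5, -4),
    (4, 2, 2), (4, 3, 2), (4, 6, 2), (5, 2, -2), (5, 3, 2), (5, 5, -4), (5, 6, -2), (8, 2, 3),
    (8, 3, -1), (8, 5, 2), (8, 6, 1), (8, 8, -2), (9, 2, -1), (9, 3, -1), (9, 5, -2), (9, 6, 1),
    (9, 8, -2), (9, 10, -4)]

/-- `TurnCohomology (-1) 2` is `ℤ/4`. -/
def negTurnCertificate₂ : HomologyCertificate (Fin 16) 1 where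
  order := ![4]
  generator := ![sparseVector [(6, 1), (7, -1), (9, 1), (10, 1), (11, -1)]]
  primitive := ![sparseVector [(2, -1), (3, 1), (4, 1), (5, -1), (9, -2)]]
  functional := ![sparseForm [(2, -2), (4, 1), (5, 1), (6, 1), (8, 2)]]
  homotopy := sparseMatrix [(0, 8, 1), (2, 2, -1), (2, 8, 1), (3, 5, -1), (3, 8, -1), (4, 2, 1),
    (4, 4, -1), (9, 2, -1), (9, 4, 1), (9, 12, -1)]
  correction := sparseMatrix [(0, 0, -2), (1, 0, -2), (1, 8, 4), (3, 5, -4), (3, 8, -4), (7, 5, 4),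
    (7, 6, -4), (7, 8, 4), (9, 5, -2), (9, 6, 2), (9, 8, -2), (9, 10, -2), (9, 11, -2), (9, 12, 4),
    (9, 14, 2), (10, 5, -2), (10, 6, 2), (10, 8, -2), (10, 10, -2), (10, 11, -2), (10, 14, 2),
    (11, 5, -2), (11, 6, -2), (11, 8, -2), (11, 10, 2), (11, 11, -2), (11, 12, -4), (11, 14, -2),
    (13, 5, -4), (13, 8, -4), (13, 10, 4), (13, 12, -4)]

/-- `TurnCohomology (-1) 3` and `TurnCohomology (-1) 5` are `(ℤ/2)²`. -/
def negTurnCertificate₃ : HomologyCertificate (Fin 16) 2 where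
  order := ![2, 2]
  generator := ![sparseVector [(0, 1), (1, 1)], sparseVector [(14, 1), (15, -1)]]
  primitive := ![sparseVector [(0, -1), (1, -1)], sparseVector [(6, -1), (7, 1)]]
  functional := ![
    sparseForm [(1, 1)],
    sparseForm [(5, 1), (6, -1), (8, 1), (10, 1), (11, 1), (14, 1)]]
  homotopy := sparseMatrix [(0, 8, -1), (5, 5, 1), (5, 8, 1), (6, 5, 1), (6, 6, -1), (6, 8, 1),
    (8, 5, 1), (8, 8, 1), (8, 10, -1), (8, 11, 1), (8, 12, 1), (10, 5, -1), (10, 8, -1),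
    (10, 11, -1), (10, 12, -1), (12, 5, -1), (12, 8, -1), (12, 10, 1), (12, 12, -1)]
  correction := sparseMatrix [(0, 8, 4), (2, 2, -4), (2, 8, 4), (3, 2, 4), (3, 3, -4), (3, 4, -4),
    (3, 8, -4), (4, 2, 4), (4, 4, -4), (7, 2, 6), (7, 3, -2), (7, 4, -4), (7, 6, -2), (7, 8, -4),
    (9, 8, -2), (9, 9, -2), (13, 2, -8), (13, 3, 4), (13, 4, 4), (13, 8, 6), (13, 9, -2),
    (13, 10, 4), (15, 2, 2), (15, 3, -2), (15, 6, 2), (15, 8, -2), (15, 9, 2), (15, 10, -4),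
    (15, 14, -4)]

/-- `TurnCohomology (-1) 4` is `(ℤ/2)²`. -/
def negTurnCertificate₄ : HomologyCertificate (Fin 16) 2 where
  order := ![2, 2]
  generator := ![
    sparseVector [(6, 1), (7, -1), (15, -1)],
    sparseVector [(9, 1), (12, 1), (13, -1), (15, -1)]]
  primitive := ![sparseVector [(6, 1), (14, 1)], sparseVector [(9, -1), (10, -1), (14, 1)]]
  functional := ![
    sparseForm [(2, -3), (3, 1), (4, 2), (6, 1), (8, 2)],
    sparseForm [(2, 4), (3, -2), (4, -2), (8, -3), (9, 1), (10, -2)]]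
  homotopy := sparseMatrix [(1, 8, -1), (2, 2, -1), (2, 8, 1), (3, 2, 1), (3, 3, -1), (3, 4, -1),
    (3, 8, -1), (4, 2, 1), (4, 4, -1), (9, 2, 2), (9, 3, -1), (9, 4, -1), (9, 8, -2), (9, 10, -1),
    (14, 14, -1)]
  correction := sparseMatrix [(0, 1, -2), (0, 8, -4), (1, 1, -2), (5, 5, 4), (5, 8, 4), (7, 5, 4),
    (7, 6, -4), (7, 8, 4), (11, 5, -4), (11, 8, -4), (11, 11, -4), (11, 12, -4), (12, 5, -4),
    (12, 8, -4), (12, 12, -4), (13, 10, 4), (15, 5, 6), (15, 6, -2), (15, 8, 6), (15, 10, 2),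
    (15, 11, 2), (15, 12, 4), (15, 14, -2)]

/-- The orders of the cyclic summands of `TurnCohomology (-1) n`. -/
def negTurnFactors : ℕ → Multiset ℕ
  | 0 => 0
  | 1 => {2}
  | 2 => {4}
  | _ => {2, 2}

theorem hasCyclicFactors_turnCohomology_neg_one :
    ∀ n : ℕ, HasCyclicFactors (TurnCohomology (-1) n) (negTurnFactors n)
  | 0 => CertifiesTurnCohomology.hasCyclicFactors (C := negTurnCertificate₀)
      (by constructor <;> decide +kernel)
  | 1 => CertifiesTurnCohomology.hasCyclicFactors (C := negTurnCertificate₁)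
      (by constructor <;> decide +kernel)
  | 2 => CertifiesTurnCohomology.hasCyclicFactors (C := negTurnCertificate₂)
      (by constructor <;> decide +kernel)
  | 3 => CertifiesTurnCohomology.hasCyclicFactors (C := negTurnCertificate₃)
      (by constructor <;> decide +kernel)
  | 4 => CertifiesTurnCohomology.hasCyclicFactors (C := negTurnCertificate₄)
      (by constructor <;> decide +kernel)
  | 5 => CertifiesTurnCohomology.hasCyclicFactors (C := negTurnCertificate₃)
      (by constructor <;> decide +kernel)
  | n + 6 => by
    obtain ⟨e⟩ := nonempty_turnCohomology_add_six_equiv (-1) n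
    exact (hasCyclicFactors_turnCohomology_neg_one (n + 4)).of_equiv e

end TurnCohomology

section Decomposition

theorem nonempty_totalCohomology_holModel_equiv (n : ℤ) :
    Nonempty (TotalCohomology 4 (holModel.op 1) holModel.periodic n ≃ₗ[ℤ]
      (TurnCohomology 1 n × TurnCohomology (-1) (n - 1)) ×
        TurnCohomology 1 (n - 1) × TurnCohomology (-1) (n - 1 - 1)) := by
  unfold TurnCohomology
  rw [op_holModel, periodic_holModel, one_smul]
  have split_reversed := nonempty_totalCohomology_cylinder_equiv (q := 4) (u := -1)
    (S := quarterTurnOp) (P := translationInvariants ℤ evenLattice)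
  obtain ⟨split_fixed⟩ := nonempty_totalCohomology_cylinder_equiv (q := 4) (u := 1)
    (S := cylinderOp (-1) quarterTurnOp) (P := cylinder (translationInvariants ℤ evenLattice)) n
  rw [one_smul] at split_fixed
  obtain ⟨e⟩ := split_reversed n
  obtain ⟨e'⟩ := split_reversed (n - 1)
  exact ⟨split_fixed.trans (e.prodCongr e')⟩

theorem hasCyclicFactors_H_succ {n : ℕ} {m : Multiset ℕ}
    (hm : HasCyclicFactors (TurnCohomology (-1) (n - 1)) m) :
    HasCyclicFactors (H (n + 1))
      (turnFactors (n + 1) + negTurnFactors n + (turnFactors n + m)) := by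
  obtain ⟨e⟩ := holModel.nonempty_equiv_cohCrys holM_pow n
  obtain ⟨e'⟩ := nonempty_totalCohomology_holModel_equiv (n + 1)
  refine HasCyclicFactors.of_equiv (.prod (.prod ?_ ?_) (.prod ?_ ?_)) (e.symm.trans e').toAddEquiv
  · exact hasCyclicFactors_turnCohomology_one (n + 1)
  · rw [add_sub_cancel_right]
    exact hasCyclicFactors_turnCohomology_neg_one n
  · rw [add_sub_cancel_right]
    exact hasCyclicFactors_turnCohomology_one n
  · rwa [add_sub_cancel_right]

theorem hasCyclicFactors_H_one : HasCyclicFactors (H 1) {0, 0} := by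
  have : Subsingleton (TurnCohomology (-1) ((0 : ℕ) - 1)) :=
    subsingleton_totalCohomology (by decide)
  exact hasCyclicFactors_H_succ .zero

theorem hasCyclicFactors_H_add_two (n : ℕ) : HasCyclicFactors (H (n + 2))
    (turnFactors (n + 2) + negTurnFactors (n + 1) + (turnFactors (n + 1) + negTurnFactors n)) :=
  hasCyclicFactors_H_succ <| by
    have degree : ((n + 1 : ℕ) : ℤ) - 1 = n := by omega
    rw [degree]
    exact hasCyclicFactors_turnCohomology_neg_one n

end Decomposition

theorem cohomology_min82_1_3 :
    Nonempty (H 1 ≃+ (Fin 2 → ℤ)) ∧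
    Nonempty (H 2 ≃+ ((Fin 2 → ℤ) × ZMod 4 × ZMod 2)) ∧
    Nonempty (H 3 ≃+ ((Fin 2 → ℤ) × (Fin 2 → ZMod 4) × (Fin 2 → ZMod 2))) ∧
    Nonempty (H 4 ≃+ (ℤ × (Fin 2 → ZMod 4) × (Fin 4 → ZMod 2))) ∧
    (∀ i, 5 ≤ i → Nonempty (H i ≃+ ((Fin 2 → ZMod 4) × (Fin 6 → ZMod 2)))) := by
  refine ⟨?_, ?_, ?_, ?_, fun i hi => ?_⟩
  · exact hasCyclicFactors_H_one.nonempty_addEquiv (.pi_zmod 2 0) rfl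
  · exact (hasCyclicFactors_H_add_two 0).nonempty_addEquiv
      (.prod (.pi_zmod 2 0) (.prod (.zmod 4) (.zmod 2))) (by decide)
  · exact (hasCyclicFactors_H_add_two 1).nonempty_addEquiv
      (.prod (.pi_zmod 2 0) (.prod (.pi_zmod 2 4) (.pi_zmod 2 2))) (by decide)
  · exact (hasCyclicFactors_H_add_two 2).nonempty_addEquiv
      (.prod (.zmod 0) (.prod (.pi_zmod 2 4) (.pi_zmod 4 2))) (by decide)
  · obtain ⟨n, rfl⟩ := Nat.exists_eq_add_of_le' hi
    have factors : HasCyclicFactors (H (n + 5)) ({4, 2} + {2, 2} + ({4, 2} + {2, 2})) :=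
      hasCyclicFactors_H_add_two (n + 3)
    exact factors.nonempty_addEquiv (.prod (.pi_zmod 2 4) (.pi_zmod 6 2)) (by decide)
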